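/- Let d ≥ 1, set q := 2d, and let E ≅ ℂ^m be a finite-dimensional complex vector space. Let D be a prenormally hyperbolic differential operator on ℝ^{1+d} with smooth coefficients not depending on the time variable t, acting on E-valued functions. Let S, S₊, S₋ be tempered distributions on ℝ^{1+2d} = ℝ_s × ℝ^d_x × ℝ^d_{x'} with values in L(E), and let S₀ be a smooth L(E)-valued function on ℝ^{1+2d}, such that: (1) S = S₊ + S₋ + S₀; (2) S₊ and S₋ are bi-parametrices for D; (3) supp(F₀S₊) ⊆ [α,∞) × ℝ^{2d} for some α ∈ ℝ and supp(F₀S₋) ⊆ (−∞,β] × ℝ^{2d} for some β ∈ ℝ (static asymptotic spectral condition). Then S₊ satisfies the Hadamard condition: WF(S₊) = WF(S) ∩ K⁺; and likewise WF(S₋) = WF(S) ∩ K⁻. (In the paper, S is the causal propagator of D in the time-translation-invariant picture; the conclusion holds for any S admitting the above decomposition.) -/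

import Mathlib

/-!
Fix a direction `k₀ ≠ 0` in `ℝ^{1+2d}`. Everything follows from two uniform decay estimates for the
localised Fourier transforms `k ↦ u(φ e^{-i⟨·,k⟩})`, valid for *every* test function `φ` with one
and the same cone.

* **Vanishing time frequency** (`prenormal_decay`, `biParametrix_strongReg`). If `D'D` is normally
  hyperbolic, then its lift to `ℝ^{1+2d}` in the variables `(s,x)` sends a bi-parametrix to a smooth
  function, and its symbol is `k_s² - |k_x|²`; in the variables `(s,x')`, with `∂_s` replaced by
  `-∂_s`, the symbol is `k_s² - |k_{x'}|²`. If `k_s = 0` and `k ≠ 0`, one of the two is nonzero, so a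
  bi-parametrix is microlocally regular there. The elliptic estimate `elliptic_decay` is elementary:
  testing the equation against `φ e^{-i⟨·,k⟩}` expresses the symbol times the localised Fourier
  transform through localised Fourier transforms of the entries of the same column or row with
  other cut-offs, with coefficients of degree at most one in `k`. Starting from the polynomial
  growth of a tempered distribution, each use of this identity gains one power of decay. The matrix
  structure is harmless because the principal symbol is scalar.

* **Spectral support** (`spectral_decay`). Write `φ = F₀g` with `g` a Schwartz function. Then
  `φ e^{-i⟨·,k⟩}` is `F₀` of `g`, translated by `k_s` in the frequency and modulated in the other
  variables. If the spectrum of `u` lies in `ω ≥ α` and `k_s ≤ -c‖k‖`, the part of `g` in a ball of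
  radius proportional to `‖k‖` is translated off the spectrum and contributes nothing
  (`pf_eq_zero_of_disjoint`), while the remaining tail of `g` has seminorms decaying faster than
  any power of `‖k‖`.

Consequently `WF(S₊)` contains no direction with `k_s < 0` (spectral support) or `k_s = 0`
(ellipticity), and for `k_s > 0` both `S₋` and `S₀` are regular, so that `S` and `S₊` have the same
regular directed points. The same argument with the sign of `k_s` reversed treats `S₋`
(`hadamard_of_spectral`).
-/

open MeasureTheory Complex

noncomputable section

abbrev Vec (p : ℕ) : Type := Fin p → ℝ

abbrev TD (p : ℕ) := SchwartzMap (Vec p) ℂ →L[ℂ] ℂ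

def modFn {p : ℕ} (φ : SchwartzMap (Vec p) ℂ) (k : Vec p) : Vec p → ℂ :=
  fun x => φ x * Complex.exp (-Complex.I * ((∑ i, x i * k i : ℝ) : ℂ))

def IsConicNbhd {p : ℕ} (Γ : Set (Vec p)) (k₀ : Vec p) : Prop :=
  IsOpen Γ ∧ k₀ ∈ Γ ∧ ∀ k ∈ Γ, ∀ t : ℝ, 0 < t → t • k ∈ Γ

def IsRegularDirectedPoint {p : ℕ} (u : TD p) (x₀ k₀ : Vec p) : Prop :=
  ∃ φ : SchwartzMap (Vec p) ℂ, HasCompactSupport ⇑φ ∧ φ x₀ ≠ 0 ∧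
    ∃ Γ : Set (Vec p), IsConicNbhd Γ k₀ ∧
      ∀ n : ℕ, ∃ C : ℝ, ∀ k ∈ Γ, ∀ ψ : SchwartzMap (Vec p) ℂ,
        (∀ x, ψ x = modFn φ k x) → ‖u ψ‖ ≤ C * (1 + ‖k‖) ^ (-(n : ℤ))

def wfSet {p : ℕ} (u : TD p) : Set (Vec p × Vec p) :=
  {z | z.2 ≠ 0 ∧ ¬ IsRegularDirectedPoint u z.1 z.2}

def wfSetVec {p m : ℕ} (u : Fin m → TD p) : Set (Vec p × Vec p) := ⋃ i, wfSet (u i)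

def partialFourierIntegral {q : ℕ} (φ : Vec (q+1) → ℂ) (y : Vec (q+1)) : ℂ :=
  ∫ t : ℝ, Complex.exp (-Complex.I * ((t * y 0 : ℝ) : ℂ)) * φ (Function.update y 0 t)

def PFVanishesOn {q : ℕ} (u : TD (q+1)) (U : Set (Vec (q+1))) : Prop :=
  ∀ φ ψ : SchwartzMap (Vec (q+1)) ℂ, HasCompactSupport ⇑φ → tsupport ⇑φ ⊆ U →
    (∀ y, ψ y = partialFourierIntegral ⇑φ y) → u ψ = 0

def pfSupport {q : ℕ} (u : TD (q+1)) : Set (Vec (q+1)) :=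
  {y | ¬ ∃ U : Set (Vec (q+1)), IsOpen U ∧ y ∈ U ∧ PFVanishesOn u U}

def fullFourierIntegral {p : ℕ} (φ : Vec p → ℂ) (y : Vec p) : ℂ :=
  ∫ x : Vec p, Complex.exp (-Complex.I * ((∑ i, x i * y i : ℝ) : ℂ)) * φ x

def FFVanishesOn {p : ℕ} (u : TD p) (U : Set (Vec p)) : Prop :=
  ∀ φ ψ : SchwartzMap (Vec p) ℂ, HasCompactSupport ⇑φ → tsupport ⇑φ ⊆ U →
    (∀ y, ψ y = fullFourierIntegral ⇑φ y) → u ψ = 0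

def ffSupport {p : ℕ} (u : TD p) : Set (Vec p) :=
  {y | ¬ ∃ U : Set (Vec p), IsOpen U ∧ y ∈ U ∧ FFVanishesOn u U}


/-- Directional derivative along the `μ`-th coordinate direction. -/
def sdirD {n : ℕ} (μ : Fin n) (f : Vec n → ℂ) : Vec n → ℂ :=
  fun x => fderiv ℝ f x (Pi.single μ 1)

/-- Iterated coordinate derivatives along a word (list) of coordinate directions. -/
def multiDeriv {n : ℕ} : List (Fin n) → (Vec n → ℂ) → Vec n → ℂ
  | [], f => f
  | μ :: w, f => sdirD μ (multiDeriv w f)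

/-- A (representation of a) linear differential operator on `ℂ^m`-valued functions on `ℝ^n`:
a finite list of terms, each consisting of an `L(ℂ^m)`-valued coefficient function together
with a word of coordinate directions along which to differentiate. -/
abbrev DOp (n m : ℕ) : Type := List ((Vec n → Fin m → Fin m → ℂ) × List (Fin n))

/-- The action of a differential operator on (smooth) `ℂ^m`-valued functions. -/
def DOp.app {n m : ℕ} (D : DOp n m) (f : Vec n → Fin m → ℂ) : Vec n → Fin m → ℂ :=
  fun x j => (D.map fun t => ∑ l, t.1 x j l * multiDeriv t.2 (fun y => f y l) x).sum

/-- All coefficients of the operator are smooth. -/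
def DOp.Smooth {n m : ℕ} (D : DOp n m) : Prop :=
  ∀ t ∈ D, ∀ j l, ContDiff ℝ (⊤ : ℕ∞) fun x => t.1 x j l

/-- The coefficients of the operator do not depend on the time variable (coordinate `0`). -/
def DOp.TimeIndep {n m : ℕ} [NeZero n] (D : DOp n m) : Prop :=
  ∀ t ∈ D, ∀ (x : Vec n) (s : ℝ), t.1 (Function.update x 0 s) = t.1 x

/-- An operation on `ℂ^m`-valued functions on `ℝ^{1+d}` is normally hyperbolic of order two if,
on smooth functions, it agrees with `-∂_t² + Δ_x + Σ_μ K^μ ∂_μ + L` for some smooth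
`L(ℂ^m)`-valued coefficients `K^μ, L` (Minkowski signature `(-,+,…,+)`). -/
def IsNormallyHypAction (d m : ℕ)
    (A : (Vec (d+1) → Fin m → ℂ) → Vec (d+1) → Fin m → ℂ) : Prop :=
  ∃ K : Fin (d+1) → Vec (d+1) → Fin m → Fin m → ℂ,
  ∃ L : Vec (d+1) → Fin m → Fin m → ℂ,
    (∀ μ j l, ContDiff ℝ (⊤ : ℕ∞) fun x => K μ x j l) ∧
    (∀ j l, ContDiff ℝ (⊤ : ℕ∞) fun x => L x j l) ∧
    ∀ f : Vec (d+1) → Fin m → ℂ, (∀ j, ContDiff ℝ (⊤ : ℕ∞) fun x => f x j) →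
      ∀ x j, A f x j =
        -(sdirD 0 (sdirD 0 fun y => f y j) x)
        + (∑ i : Fin d, sdirD i.succ (sdirD i.succ fun y => f y j) x)
        + (∑ μ, ∑ l, K μ x j l * sdirD μ (fun y => f y l) x)
        + ∑ l, L x j l * f x l

/-- `D` is prenormally hyperbolic: there is a differential operator `D'` with smooth
coefficients such that both `D D'` and `D' D` are normally hyperbolic of order two. -/
def IsPrenormallyHyp (d m : ℕ) (D : DOp (d+1) m) : Prop :=
  ∃ D' : DOp (d+1) m, D'.Smooth ∧
    IsNormallyHypAction d m (fun f => D.app (D'.app f)) ∧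
    IsNormallyHypAction d m (fun f => D'.app (D.app f))

/-- Embedding of the `(s,x)`-coordinates of `ℝ^{1+d}` into `ℝ^{1+2d} = ℝ_s × ℝ^d_x × ℝ^d_{x'}`. -/
def emb1 (d : ℕ) : Fin (d+1) → Fin (2*d+1) := fun μ => ⟨μ.1, by have := μ.isLt; omega⟩

/-- Embedding of the `(s,x')`-coordinates of `ℝ^{1+d}` into `ℝ^{1+2d} = ℝ_s × ℝ^d_x × ℝ^d_{x'}`. -/
def emb2 (d : ℕ) : Fin (d+1) → Fin (2*d+1) :=
  fun μ => if μ.1 = 0 then ⟨0, by omega⟩ else ⟨μ.1 + d, by have := μ.isLt; omega⟩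

/-- Lift an operator on `ℝ^{1+d}` to `ℝ^{1+2d}`, acting in the variables selected by the
embedding `em`; if `sgn = true`, every occurrence of `∂_s` (direction `0`) is replaced by
`-∂_s`. -/
def liftOp {d m : ℕ} (sgn : Bool) (em : Fin (d+1) → Fin (2*d+1)) (D : DOp (d+1) m) :
    DOp (2*d+1) m :=
  D.map fun t =>
    (fun z j l => (if sgn then (-1 : ℂ) ^ (t.2.count 0) else 1) * t.1 (fun μ => z (em μ)) j l,
     t.2.map em)

/-- Pointwise formal transpose of the operator `D`, applied to a test function `φ`:
the `(j,l)` matrix entry of `Σ_terms (-1)^{|w|} ∂^w (c φ)`. -/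
def transposeApp {n m : ℕ} (D : DOp n m) (j l : Fin m) (φ : Vec n → ℂ) (x : Vec n) : ℂ :=
  (D.map fun t => ((-1 : ℂ) ^ t.2.length) * multiDeriv t.2 (fun y => t.1 y j l * φ y) x).sum

/-- `S` is a bi-parametrix for `D` (with `D` acting in the time-translation-invariant picture
on `ℝ^{1+2d}`): (a) `D` applied in the variables `(s,x)` to `S` is a smooth function, and
(b) the operator obtained from `D` by replacing `∂_s` by `-∂_s`, applied in the variables
`(s,x')`, also yields a smooth function.  Both conditions are expressed distributionally via
the formal transpose tested against compactly supported test functions. -/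
def IsBiParametrix (d m : ℕ) (D : DOp (d+1) m) (S : Fin m → Fin m → TD (2*d+1)) : Prop :=
  (∃ f : Vec (2*d+1) → Fin m → Fin m → ℂ, (∀ j l, ContDiff ℝ (⊤ : ℕ∞) fun x => f x j l) ∧
    ∀ (j l' : Fin m) (φ : SchwartzMap (Vec (2*d+1)) ℂ), HasCompactSupport ⇑φ →
      ∀ ψ : Fin m → SchwartzMap (Vec (2*d+1)) ℂ,
        (∀ l x, ψ l x = transposeApp (liftOp false (emb1 d) D) j l ⇑φ x) →
        (∑ l, S l l' (ψ l)) = ∫ x, f x j l' * φ x) ∧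
  (∃ g : Vec (2*d+1) → Fin m → Fin m → ℂ, (∀ j l, ContDiff ℝ (⊤ : ℕ∞) fun x => g x j l) ∧
    ∀ (j l' : Fin m) (φ : SchwartzMap (Vec (2*d+1)) ℂ), HasCompactSupport ⇑φ →
      ∀ ψ : Fin m → SchwartzMap (Vec (2*d+1)) ℂ,
        (∀ l x, ψ l x = transposeApp (liftOp true (emb2 d) D) l' l ⇑φ x) →
        (∑ l, S j l (ψ l)) = ∫ x, g x j l' * φ x)

/-- Wave front set of an `L(ℂ^m)`-valued distribution: union over the matrix entries. -/
def wfSetMat {p m : ℕ} (S : Fin m → Fin m → TD p) : Set (Vec p × Vec p) :=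
  ⋃ j, ⋃ l, wfSet (S j l)

/-! ### Test functions, formal transposes and plane waves -/

/-- Test functions: smooth complex functions with compact support. -/
structure IsTest {n : ℕ} (f : Vec n → ℂ) : Prop where
  smooth : ContDiff ℝ (⊤ : ℕ∞) f
  supp : HasCompactSupport f

/-- The plane wave `x ↦ e^{-i⟨x,k⟩}`. -/
def planeWave {n : ℕ} (k : Vec n) : Vec n → ℂ :=
  fun x => Complex.exp (-Complex.I * ((∑ i, x i * k i : ℝ) : ℂ))

lemma sdirD_smooth {n : ℕ} (μ : Fin n) {f : Vec n → ℂ} (hf : ContDiff ℝ (⊤ : ℕ∞) f) :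
    ContDiff ℝ (⊤ : ℕ∞) (sdirD μ f) :=
  (hf.fderiv_right (m := (⊤ : ℕ∞)) (by simp)).clm_apply contDiff_const

lemma multiDeriv_smooth {n : ℕ} (w : List (Fin n)) {f : Vec n → ℂ}
    (hf : ContDiff ℝ (⊤ : ℕ∞) f) : ContDiff ℝ (⊤ : ℕ∞) (multiDeriv w f) := by
  induction w with
  | nil => exact hf
  | cons μ w ih => exact sdirD_smooth μ ih

lemma smooth_diffAt {n : ℕ} {f : Vec n → ℂ} (hf : ContDiff ℝ (⊤ : ℕ∞) f) (x : Vec n) :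
    DifferentiableAt ℝ f x :=
  (hf.differentiable (by simp)) x

lemma sdirD_add {n : ℕ} (μ : Fin n) {f g : Vec n → ℂ} (hf : ContDiff ℝ (⊤ : ℕ∞) f)
    (hg : ContDiff ℝ (⊤ : ℕ∞) g) :
    sdirD μ (fun x => f x + g x) = fun x => sdirD μ f x + sdirD μ g x := by
  funext x
  unfold sdirD
  rw [fderiv_fun_add (smooth_diffAt hf x) (smooth_diffAt hg x)]
  rfl

lemma sdirD_mul {n : ℕ} (μ : Fin n) {f g : Vec n → ℂ} (hf : ContDiff ℝ (⊤ : ℕ∞) f)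
    (hg : ContDiff ℝ (⊤ : ℕ∞) g) :
    sdirD μ (fun x => f x * g x) = fun x => f x * sdirD μ g x + sdirD μ f x * g x := by
  funext x
  unfold sdirD
  rw [fderiv_fun_mul (smooth_diffAt hf x) (smooth_diffAt hg x)]
  simp [mul_comm]

lemma sdirD_const_mul {n : ℕ} (μ : Fin n) (c : ℂ) {f : Vec n → ℂ}
    (hf : ContDiff ℝ (⊤ : ℕ∞) f) :
    sdirD μ (fun x => c * f x) = fun x => c * sdirD μ f x := by
  rw [sdirD_mul μ contDiff_const hf]
  funext x
  simp [sdirD]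

lemma sdirD_sum {n : ℕ} {ι : Type*} (s : Finset ι) (μ : Fin n) {f : ι → Vec n → ℂ}
    (hf : ∀ i ∈ s, ContDiff ℝ (⊤ : ℕ∞) (f i)) :
    sdirD μ (fun x => ∑ i ∈ s, f i x) = fun x => ∑ i ∈ s, sdirD μ (f i) x := by
  funext x
  unfold sdirD
  rw [fderiv_fun_sum fun i hi => smooth_diffAt (hf i hi) x]
  simp

lemma sdirD_comm {n : ℕ} (μ ν : Fin n) {f : Vec n → ℂ} (hf : ContDiff ℝ (⊤ : ℕ∞) f) :
    sdirD μ (sdirD ν f) = sdirD ν (sdirD μ f) := by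
  funext x
  have hd : DifferentiableAt ℝ (fderiv ℝ f) x :=
    ((hf.fderiv_right (m := (⊤ : ℕ∞)) (by simp)).differentiable (by simp)) x
  have key : ∀ v w : Vec n, fderiv ℝ (fun y => fderiv ℝ f y v) x w
      = fderiv ℝ (fderiv ℝ f) x w v := by
    intro v w
    rw [fderiv_clm_apply hd (differentiableAt_const v)]
    simp
  have hs : IsSymmSndFDerivAt ℝ f x :=
    hf.contDiffAt.isSymmSndFDerivAt (by
      simp only [minSmoothness_of_isRCLikeNormedField]
      exact WithTop.coe_le_coe.2 (OrderTop.le_top (2 : ℕ∞)))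
  change fderiv ℝ (fun y => fderiv ℝ f y (Pi.single ν 1)) x (Pi.single μ 1)
    = fderiv ℝ (fun y => fderiv ℝ f y (Pi.single μ 1)) x (Pi.single ν 1)
  rw [key, key]
  exact hs _ _

lemma multiDeriv_sdirD {n : ℕ} (w : List (Fin n)) (μ : Fin n) {f : Vec n → ℂ}
    (hf : ContDiff ℝ (⊤ : ℕ∞) f) : multiDeriv w (sdirD μ f) = sdirD μ (multiDeriv w f) := by
  induction w with
  | nil => rfl
  | cons ν w ih =>
    change sdirD ν (multiDeriv w (sdirD μ f)) = sdirD μ (sdirD ν (multiDeriv w f))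
    rw [ih, sdirD_comm _ _ (multiDeriv_smooth w hf)]

namespace IsTest
variable {n : ℕ} {f g : Vec n → ℂ}

lemma add (hf : IsTest f) (hg : IsTest g) : IsTest (fun x => f x + g x) :=
  ⟨hf.smooth.add hg.smooth, hf.supp.add hg.supp⟩

lemma smooth_mul (hf : ContDiff ℝ (⊤ : ℕ∞) f) (hg : IsTest g) : IsTest (fun x => f x * g x) :=
  ⟨hf.mul hg.smooth, hg.supp.mul_left⟩

lemma mul_smooth (hf : IsTest f) (hg : ContDiff ℝ (⊤ : ℕ∞) g) : IsTest (fun x => f x * g x) :=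
  ⟨hf.smooth.mul hg, hf.supp.mul_right⟩

lemma const_mul (c : ℂ) (hf : IsTest f) : IsTest (fun x => c * f x) :=
  smooth_mul contDiff_const hf

lemma zero : IsTest (fun _ : Vec n => (0 : ℂ)) :=
  ⟨contDiff_const, HasCompactSupport.zero⟩

lemma sum {ι : Type*} (s : Finset ι) {F : ι → Vec n → ℂ} (h : ∀ i ∈ s, IsTest (F i)) :
    IsTest (fun x => ∑ i ∈ s, F i x) := by
  classical
  induction s using Finset.induction_on with
  | empty => simpa using zero
  | insert a s ha ih =>
    simp only [Finset.sum_insert ha]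
    exact (h a (by simp)).add (ih fun i hi => h i (by simp [hi]))

lemma list_sum {ι : Type*} (s : List ι) {F : ι → Vec n → ℂ} (h : ∀ i ∈ s, IsTest (F i)) :
    IsTest (fun x => (s.map fun i => F i x).sum) := by
  induction s with
  | nil => simpa using zero
  | cons a s ih =>
    simp only [List.map_cons, List.sum_cons]
    exact (h a (by simp)).add (ih fun i hi => h i (by simp [hi]))

lemma sdirD (μ : Fin n) (hf : IsTest f) : IsTest (sdirD μ f) := by
  refine ⟨sdirD_smooth μ hf.smooth, ?_⟩
  have h := hf.supp.fderiv (𝕜 := ℝ)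
  exact h.comp_left (g := fun L : Vec n →L[ℝ] ℂ => L (Pi.single μ 1)) (by simp)

lemma multiDeriv (w : List (Fin n)) (hf : IsTest f) : IsTest (multiDeriv w f) := by
  induction w with
  | nil => exact hf
  | cons μ w ih => exact ih.sdirD μ

lemma integrable (hf : IsTest f) : Integrable f :=
  hf.smooth.continuous.integrable_of_hasCompactSupport hf.supp

/-- A test function as a Schwartz function. -/
def toS (hf : IsTest f) : SchwartzMap (Vec n) ℂ := hf.supp.toSchwartzMap hf.smooth

@[simp] lemma toS_apply (hf : IsTest f) (x : Vec n) : hf.toS x = f x := rfl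

@[simp] lemma coe_toS (hf : IsTest f) : ⇑hf.toS = f := rfl

end IsTest

lemma isTest_of_schwartz {n : ℕ} (φ : SchwartzMap (Vec n) ℂ) (h : HasCompactSupport ⇑φ) :
    IsTest ⇑φ := ⟨φ.smooth _, h⟩

open Classical in
/-- Evaluation of a distribution on a bare function, with value `0` unless the function is a
test function. -/
def ev {n : ℕ} (u : TD n) (f : Vec n → ℂ) : ℂ := if h : IsTest f then u h.toS else 0

section ev
variable {n : ℕ} (u : TD n) {f g : Vec n → ℂ}

lemma ev_eq (ψ : SchwartzMap (Vec n) ℂ) (hψ : ∀ x, ψ x = f x) (hf : IsTest f) :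
    ev u f = u ψ := by
  rw [ev, dif_pos hf]
  congr 1
  ext x
  simp [hψ]

lemma ev_toS (hf : IsTest f) : ev u f = u hf.toS := ev_eq u _ (fun _ => rfl) hf

lemma ev_add (hf : IsTest f) (hg : IsTest g) :
    ev u (fun x => f x + g x) = ev u f + ev u g := by
  rw [ev_toS u hf, ev_toS u hg, ← map_add]
  exact ev_eq u _ (fun x => by simp) (hf.add hg)

lemma ev_const_mul (c : ℂ) (hf : IsTest f) : ev u (fun x => c * f x) = c * ev u f := by
  rw [ev_toS u hf, ← smul_eq_mul, ← map_smul]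
  exact ev_eq u _ (fun x => by simp) (hf.const_mul c)

lemma ev_zero : ev u (fun _ : Vec n => (0 : ℂ)) = 0 :=
  (ev_eq u 0 (fun x => by simp) IsTest.zero).trans (map_zero u)

lemma ev_sum {ι : Type*} (s : Finset ι) {F : ι → Vec n → ℂ} (h : ∀ i ∈ s, IsTest (F i)) :
    ev u (fun x => ∑ i ∈ s, F i x) = ∑ i ∈ s, ev u (F i) := by
  classical
  induction s using Finset.induction_on with
  | empty => simpa using ev_zero u
  | insert a s ha ih =>
    simp only [Finset.sum_insert ha]
    rw [ev_add u (h a (by simp)) (IsTest.sum s fun i hi => h i (by simp [hi])),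
      ih fun i hi => h i (by simp [hi])]

end ev

section parts
variable {n : ℕ}

lemma integral_sdirD_mul (μ : Fin n) {h χ : Vec n → ℂ} (hh : ContDiff ℝ (⊤ : ℕ∞) h)
    (hχ : IsTest χ) : ∫ x, sdirD μ h x * χ x = -∫ x, h x * sdirD μ χ x := by
  have := integral_mul_fderiv_eq_neg_fderiv_mul_of_integrable (μ := (volume : Measure (Vec n)))
    (f := h) (g := χ) (v := Pi.single μ 1)
    (IsTest.smooth_mul (sdirD_smooth μ hh) hχ).integrable
    (IsTest.smooth_mul hh (hχ.sdirD μ)).integrable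
    (IsTest.smooth_mul hh hχ).integrable
    (fun x _ => smooth_diffAt hh x) (fun x _ => smooth_diffAt hχ.smooth x)
  change _ = -∫ x, h x * fderiv ℝ χ x (Pi.single μ 1)
  rw [this, neg_neg]
  rfl

lemma integral_multiDeriv_mul (w : List (Fin n)) {h χ : Vec n → ℂ}
    (hh : ContDiff ℝ (⊤ : ℕ∞) h) (hχ : IsTest χ) :
    ∫ x, multiDeriv w h x * χ x = (-1) ^ w.length * ∫ x, h x * multiDeriv w χ x := by
  induction w generalizing χ with
  | nil => simp [multiDeriv]
  | cons μ w ih =>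
    change ∫ x, sdirD μ (multiDeriv w h) x * χ x = _ * ∫ x, h x * sdirD μ (multiDeriv w χ) x
    rw [integral_sdirD_mul μ (multiDeriv_smooth w hh) hχ, ih (hχ.sdirD μ),
      multiDeriv_sdirD w μ hχ.smooth]
    simp [pow_succ]

lemma transposeApp_test {m : ℕ} {A : DOp n m} (hA : A.Smooth) (j l : Fin m) {χ : Vec n → ℂ}
    (hχ : IsTest χ) : IsTest (transposeApp A j l χ) :=
  IsTest.list_sum A fun t ht => (((IsTest.smooth_mul (hA t ht j l) hχ).multiDeriv t.2).const_mul _)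

lemma DOp.app_smooth {m : ℕ} {A : DOp n m} (hA : A.Smooth) {h : Vec n → Fin m → ℂ}
    (hh : ∀ l, ContDiff ℝ (⊤ : ℕ∞) fun x => h x l) (j : Fin m) :
    ContDiff ℝ (⊤ : ℕ∞) fun x => A.app h x j := by
  induction A with
  | nil => simpa [DOp.app] using contDiff_const
  | cons t A ih =>
    have h1 := ih (fun s hs => hA s (by simp [hs]))
    simp only [DOp.app, List.map_cons, List.sum_cons] at h1 ⊢
    refine ContDiff.add (ContDiff.sum fun l _ => ?_) h1
    exact (hA t (by simp) j l).mul (multiDeriv_smooth t.2 (hh l))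

/-- The formal transpose is the adjoint of the operator for the bilinear integral pairing. -/
lemma integral_app_mul {m : ℕ} {A : DOp n m} (hA : A.Smooth) {h : Vec n → Fin m → ℂ}
    (hh : ∀ l, ContDiff ℝ (⊤ : ℕ∞) fun x => h x l) (j : Fin m) {χ : Vec n → ℂ} (hχ : IsTest χ) :
    ∫ x, A.app h x j * χ x = ∑ l, ∫ x, h x l * transposeApp A j l χ x := by
  induction A with
  | nil => simp [DOp.app, transposeApp]
  | cons t A ih =>
    have hA' : DOp.Smooth A := fun s hs => hA s (by simp [hs])
    have ht : ∀ l, ContDiff ℝ (⊤ : ℕ∞) fun x => t.1 x j l := fun l => hA t (by simp) j l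
    have h1 := ih hA'
    have e1 : ∀ x, DOp.app (t :: A) h x j * χ x
        = (∑ l, multiDeriv t.2 (fun y => h y l) x * (t.1 x j l * χ x)) + DOp.app A h x j * χ x := by
      intro x
      simp only [DOp.app, List.map_cons, List.sum_cons, add_mul, Finset.sum_mul]
      congr 1
      exact Finset.sum_congr rfl fun l _ => by ring
    have e2 : ∀ l x, h x l * transposeApp (t :: A) j l χ x
        = (-1) ^ t.2.length * (h x l * multiDeriv t.2 (fun y => t.1 y j l * χ y) x)
          + h x l * transposeApp A j l χ x := by
      intro l x
      simp only [transposeApp, List.map_cons, List.sum_cons]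
      ring
    have i1 : ∀ l, IsTest fun x => multiDeriv t.2 (fun y => h y l) x * (t.1 x j l * χ x) :=
      fun l => IsTest.smooth_mul (multiDeriv_smooth _ (hh l)) (IsTest.smooth_mul (ht l) hχ)
    simp_rw [e1, e2]
    rw [integral_add (IsTest.sum _ fun l _ => i1 l).integrable
      (IsTest.smooth_mul (DOp.app_smooth hA' hh j) hχ).integrable,
      integral_finsetSum _ fun l _ => (i1 l).integrable, h1, ← Finset.sum_add_distrib]
    refine Finset.sum_congr rfl fun l _ => ?_
    rw [integral_add ((IsTest.smooth_mul (hh l)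
        ((IsTest.smooth_mul (ht l) hχ).multiDeriv t.2)).const_mul _).integrable
      (IsTest.smooth_mul (hh l) (transposeApp_test hA' j l hχ)).integrable,
      integral_multiDeriv_mul t.2 (hh l) (IsTest.smooth_mul (ht l) hχ), integral_const_mul]

end parts

section wave
variable {n : ℕ}

lemma planeWave_smooth (k : Vec n) : ContDiff ℝ (⊤ : ℕ∞) (planeWave k) := by
  have h : ContDiff ℝ (⊤ : ℕ∞) fun x : Vec n => ∑ i, x i * k i := by fun_prop
  exact (contDiff_const.mul (Complex.ofRealCLM.contDiff.comp h)).cexp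

lemma sdirD_planeWave (μ : Fin n) (k : Vec n) :
    sdirD μ (planeWave k) = fun x => (-Complex.I * k μ) * planeWave k x := by
  funext x
  have h1 : HasFDerivAt (fun x : Vec n => ∑ i, x i * k i)
      (∑ i, (k i) • (ContinuousLinearMap.proj i : Vec n →L[ℝ] ℝ)) x := by
    apply HasFDerivAt.fun_sum
    intro i _
    exact (ContinuousLinearMap.proj (R := ℝ) (φ := fun _ : Fin n => ℝ) i).hasFDerivAt.mul_const (k i)
  have h2 := ((Complex.ofRealCLM.hasFDerivAt.comp x h1).const_mul (-Complex.I)).cexp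
  unfold sdirD
  rw [show planeWave k = fun x : Vec n => Complex.exp (-Complex.I *
    ((⇑Complex.ofRealCLM ∘ fun x : Vec n => ∑ i, x i * k i) x)) from rfl, h2.fderiv]
  simp [Pi.single_apply, mul_comm]

lemma norm_planeWave (k x : Vec n) : ‖planeWave k x‖ = 1 := by
  rw [planeWave, Complex.norm_exp]
  simp

lemma isTest_wave {φ : Vec n → ℂ} (hφ : IsTest φ) (k : Vec n) :
    IsTest (fun x => φ x * planeWave k x) := hφ.mul_smooth (planeWave_smooth k)

lemma sdirD_mul_planeWave (μ : Fin n) (k : Vec n) {φ : Vec n → ℂ} (hφ : ContDiff ℝ (⊤ : ℕ∞) φ) :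
    sdirD μ (fun x => φ x * planeWave k x)
      = fun x => (-Complex.I * k μ) * (φ x * planeWave k x) + sdirD μ φ x * planeWave k x := by
  rw [sdirD_mul μ hφ (planeWave_smooth k), sdirD_planeWave]
  funext x
  ring

end wave

/-! ### Decay and growth of localised Fourier transforms; the elliptic estimate -/

section decay
variable {n : ℕ}

lemma integral_wave_coord (μ : Fin n) {g : Vec n → ℂ} (hg : IsTest g) (k : Vec n) :
    ‖∫ x, g x * planeWave k x‖ * |k μ| = ‖∫ x, sdirD μ g x * planeWave k x‖ := by
  have h := integral_sdirD_mul μ (planeWave_smooth k) hg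
  have e1 : ∫ x, sdirD μ g x * planeWave k x = ∫ x, planeWave k x * sdirD μ g x := by
    simp_rw [mul_comm]
  have e2 : ∫ x, sdirD μ (planeWave k) x * g x
      = (-Complex.I * k μ) * ∫ x, g x * planeWave k x := by
    rw [sdirD_planeWave, ← integral_const_mul]
    congr 1
    funext x
    ring
  rw [e1, ← norm_neg (∫ x, planeWave k x * sdirD μ g x), ← h, e2]
  simp [mul_comm]

/-- The Fourier transform of a test function is rapidly decreasing. -/
lemma integral_wave_decay (N : ℕ) {g : Vec n → ℂ} (hg : IsTest g) :
    ∃ C : ℝ, ∀ k : Vec n, ‖∫ x, g x * planeWave k x‖ * (1 + ‖k‖) ^ N ≤ C := by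
  induction N generalizing g with
  | zero =>
    refine ⟨∫ x, ‖g x‖, fun k => ?_⟩
    rw [pow_zero, mul_one]
    refine (norm_integral_le_integral_norm _).trans (le_of_eq ?_)
    congr 1
    funext x
    rw [norm_mul, norm_planeWave, mul_one]
  | succ N ih =>
    obtain ⟨C0, h0⟩ := ih hg
    choose C1 h1 using fun μ => ih (hg.sdirD μ)
    refine ⟨C0 + ∑ μ, C1 μ, fun k => ?_⟩
    have hk : 1 + ‖k‖ ≤ 1 + ∑ μ, |k μ| := by
      gcongr
      refine (pi_norm_le_iff_of_nonneg (Finset.sum_nonneg fun i _ => abs_nonneg _)).2 fun i => ?_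
      exact Finset.single_le_sum (f := fun i => |k i|) (fun i _ => abs_nonneg _)
        (Finset.mem_univ i)
    calc ‖∫ x, g x * planeWave k x‖ * (1 + ‖k‖) ^ (N + 1)
        = (‖∫ x, g x * planeWave k x‖ * (1 + ‖k‖) ^ N) * (1 + ‖k‖) := by ring
      _ ≤ (‖∫ x, g x * planeWave k x‖ * (1 + ‖k‖) ^ N) * (1 + ∑ μ, |k μ|) := by gcongr
      _ = ‖∫ x, g x * planeWave k x‖ * (1 + ‖k‖) ^ N
          + ∑ μ, ‖∫ x, sdirD μ g x * planeWave k x‖ * (1 + ‖k‖) ^ N := by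
        simp_rw [← integral_wave_coord _ hg k]
        rw [mul_add, mul_one, Finset.mul_sum]
        congr 1
        exact Finset.sum_congr rfl fun i _ => by ring
      _ ≤ _ := add_le_add (h0 k) (Finset.sum_le_sum fun μ _ => h1 μ k)

end decay

section growth
variable {n : ℕ}

lemma norm_iteratedFDeriv_comp_clm {V W : Type*} [NormedAddCommGroup V] [NormedSpace ℝ V]
    [NormedAddCommGroup W] [NormedSpace ℝ W] (L : V →L[ℝ] W) {f : W → ℂ}
    (hf : ContDiff ℝ (⊤ : ℕ∞) f) (i : ℕ) (x : V) :
    ‖iteratedFDeriv ℝ i (f ∘ L) x‖ ≤ ‖iteratedFDeriv ℝ i f (L x)‖ * ‖L‖ ^ i := by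
  rw [L.iteratedFDeriv_comp_right hf x (by exact_mod_cast le_top)]
  refine (ContinuousMultilinearMap.norm_compContinuousLinearMap_le _ _).trans (le_of_eq ?_)
  simp

lemma norm_iteratedFDeriv_planeWave (i : ℕ) (k x : Vec n) :
    ‖iteratedFDeriv ℝ i (planeWave k) x‖ ≤ ((n : ℝ) * ‖k‖) ^ i := by
  let L : Vec n →L[ℝ] ℝ := ∑ j, (k j) • (ContinuousLinearMap.proj j : Vec n →L[ℝ] ℝ)
  let E : ℝ → ℂ := fun t => Complex.exp ((-Complex.I) * t)
  have hLE : planeWave k = E ∘ L := by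
    funext y
    simp only [planeWave, E, L, Function.comp, sum_apply,
      smul_apply, ContinuousLinearMap.proj_apply, smul_eq_mul]
    congr 4
    funext j
    ring
  have hE : ContDiff ℝ (⊤ : ℕ∞) E :=
    (contDiff_const.mul Complex.ofRealCLM.contDiff).cexp
  have hder : ∀ i : ℕ, iteratedDeriv i E = fun t => (-Complex.I) ^ i * E t := by
    intro i
    induction i with
    | zero => simp
    | succ i ih =>
      rw [iteratedDeriv_succ, ih]
      funext t
      have h1 : HasDerivAt E ((-Complex.I) * E t) t := by
        have h2 : HasDerivAt (fun t : ℝ => (-Complex.I) * (t : ℂ)) (-Complex.I) t := by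
          simpa using (Complex.ofRealCLM.hasDerivAt (x := t)).const_mul (-Complex.I)
        simpa [E, mul_comm] using h2.cexp
      rw [(h1.const_mul _).deriv]
      ring
  have hL : ‖L‖ ≤ (n : ℝ) * ‖k‖ := by
    refine ContinuousLinearMap.opNorm_le_bound _ (by positivity) fun y => ?_
    simp only [L, sum_apply,
      smul_apply, ContinuousLinearMap.proj_apply, smul_eq_mul]
    refine (norm_sum_le _ _).trans ?_
    calc ∑ j, ‖k j * y j‖ ≤ ∑ _j : Fin n, ‖k‖ * ‖y‖ := by
          refine Finset.sum_le_sum fun j _ => ?_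
          rw [norm_mul]
          exact mul_le_mul (norm_le_pi_norm k j) (norm_le_pi_norm y j) (norm_nonneg _)
            (norm_nonneg _)
      _ = _ := by simp; ring
  rw [hLE]
  refine (norm_iteratedFDeriv_comp_clm L hE i x).trans ?_
  rw [norm_iteratedFDeriv_eq_norm_iteratedDeriv, hder]
  have : ‖(-Complex.I) ^ i * E (L x)‖ = 1 := by
    simp [E, Complex.norm_exp]
  rw [this, one_mul]
  gcongr

/-- Differentiating a modulated function costs at most one power of the wave vector per
derivative. -/
lemma norm_iteratedFDeriv_mul_planeWave (N : ℕ) : ∃ C : ℝ, 0 ≤ C ∧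
    ∀ (k : Vec n) (a : Vec n → ℂ), ContDiff ℝ (⊤ : ℕ∞) a → ∀ i ≤ N, ∀ x,
      ‖iteratedFDeriv ℝ i (fun y => a y * planeWave k y) x‖
        ≤ C * (1 + ‖k‖) ^ N * ∑ j ∈ Finset.range (N + 1), ‖iteratedFDeriv ℝ j a x‖ := by
  refine ⟨(2 : ℝ) ^ N * ((n : ℝ) + 1) ^ N, by positivity, fun k a ha i hi x => ?_⟩
  refine (norm_iteratedFDeriv_mul_le (n := i) ha (planeWave_smooth k) x
    (by exact_mod_cast le_top)).trans ?_
  have hsub : Finset.range (i + 1) ⊆ Finset.range (N + 1) :=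
    Finset.range_subset_range.2 (by omega)
  rw [Finset.mul_sum]
  refine (Finset.sum_le_sum fun j hj => ?_).trans
    (Finset.sum_le_sum_of_subset_of_nonneg hsub fun j _ _ => by positivity)
  have hji : j ≤ i := by simpa [Nat.lt_succ_iff] using hj
  have h1 : (i.choose j : ℝ) ≤ 2 ^ N := by
    calc (i.choose j : ℝ) ≤ 2 ^ i := by exact_mod_cast Nat.choose_le_two_pow i j
      _ ≤ 2 ^ N := pow_le_pow_right₀ (by norm_num) hi
  have h2 : ‖iteratedFDeriv ℝ (i - j) (planeWave k) x‖ ≤ (((n : ℝ) + 1) * (1 + ‖k‖)) ^ N := by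
    refine (norm_iteratedFDeriv_planeWave _ k x).trans ?_
    have hn : (0 : ℝ) ≤ n := by positivity
    have hk := norm_nonneg k
    calc ((n : ℝ) * ‖k‖) ^ (i - j) ≤ (((n : ℝ) + 1) * (1 + ‖k‖)) ^ (i - j) := by
          gcongr <;> linarith
      _ ≤ _ := pow_le_pow_right₀ (by nlinarith [mul_nonneg hn hk]) (by omega)
  calc (i.choose j : ℝ) * ‖iteratedFDeriv ℝ j a x‖ * ‖iteratedFDeriv ℝ (i - j) (planeWave k) x‖
      ≤ 2 ^ N * ‖iteratedFDeriv ℝ j a x‖ * (((n : ℝ) + 1) * (1 + ‖k‖)) ^ N := by gcongr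
    _ = _ := by rw [mul_pow]; ring

/-- A tempered distribution is controlled by finitely many Schwartz seminorms. -/
lemma td_bound (u : TD n) : ∃ (J N : ℕ) (C : ℝ), 0 ≤ C ∧
    ∀ (ψ : SchwartzMap (Vec n) ℂ) (B : ℝ), 0 ≤ B →
      (∀ j ≤ J, ∀ i ≤ N, ∀ x, ‖x‖ ^ j * ‖iteratedFDeriv ℝ i ψ x‖ ≤ B) → ‖u ψ‖ ≤ C * B := by
  let q : Seminorm ℂ (SchwartzMap (Vec n) ℂ) := (normSeminorm ℂ ℂ).comp u.toLinearMap
  have hq : Continuous q := continuous_norm.comp u.continuous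
  obtain ⟨s, C, -, hC⟩ := Seminorm.bound_of_continuous
    (schwartz_withSeminorms ℂ (Vec n) ℂ) q hq
  refine ⟨s.sup Prod.fst, s.sup Prod.snd, C, C.2, fun ψ B hB h => ?_⟩
  have h1 : q ψ ≤ C * (s.sup (schwartzSeminormFamily ℂ (Vec n) ℂ)) ψ := hC ψ
  refine h1.trans (mul_le_mul_of_nonneg_left ?_ C.2)
  refine Seminorm.finset_sup_apply_le hB fun i hi => ?_
  exact SchwartzMap.seminorm_le_bound ℂ i.1 i.2 ψ hB
    (h i.1 (Finset.le_sup (f := Prod.fst) hi) i.2 (Finset.le_sup (f := Prod.snd) hi))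

lemma isTest_pow_bound {φ : Vec n → ℂ} (hφ : IsTest φ) (J N : ℕ) :
    ∃ B : ℝ, 0 ≤ B ∧ ∀ j ≤ J, ∀ x,
      ‖x‖ ^ j * ∑ i ∈ Finset.range (N + 1), ‖iteratedFDeriv ℝ i φ x‖ ≤ B := by
  choose C hC using fun p : ℕ × ℕ => hφ.toS.decay' p.1 p.2
  refine ⟨∑ j ∈ Finset.range (J + 1), ∑ i ∈ Finset.range (N + 1), |C (j, i)|,
    Finset.sum_nonneg fun j _ => Finset.sum_nonneg fun i _ => abs_nonneg _, fun j hj x => ?_⟩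
  have h1 : ‖x‖ ^ j * ∑ i ∈ Finset.range (N + 1), ‖iteratedFDeriv ℝ i φ x‖
      ≤ ∑ i ∈ Finset.range (N + 1), |C (j, i)| := by
    rw [Finset.mul_sum]
    exact Finset.sum_le_sum fun i _ => (hC (j, i) x).trans (le_abs_self _)
  refine h1.trans ?_
  exact Finset.single_le_sum
    (f := fun j => ∑ i ∈ Finset.range (N + 1), |C (j, i)|)
    (fun j _ => Finset.sum_nonneg fun i _ => abs_nonneg _)
    (Finset.mem_range.2 (Nat.lt_succ_of_le hj))

/-- Localised Fourier transforms of a tempered distribution grow at most polynomially, with an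
exponent independent of the localising function. -/
lemma ev_wave_growth (u : TD n) : ∃ M : ℕ, ∀ φ : Vec n → ℂ, IsTest φ →
    ∃ C : ℝ, 0 ≤ C ∧ ∀ k, ‖ev u (fun x => φ x * planeWave k x)‖ ≤ C * (1 + ‖k‖) ^ M := by
  obtain ⟨J, N, C, hC, h⟩ := td_bound u
  obtain ⟨C', hC', h'⟩ := norm_iteratedFDeriv_mul_planeWave (n := n) N
  refine ⟨N, fun φ hφ => ?_⟩
  obtain ⟨B, hB, hb⟩ := isTest_pow_bound hφ J N
  refine ⟨C * (C' * B), by positivity, fun k => ?_⟩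
  rw [ev_toS u (isTest_wave hφ k)]
  refine (h _ (C' * (1 + ‖k‖) ^ N * B) (by positivity) fun j hj i hi x => ?_).trans
    (le_of_eq (by ring))
  calc ‖x‖ ^ j * ‖iteratedFDeriv ℝ i (fun y => φ y * planeWave k y) x‖
      ≤ ‖x‖ ^ j * (C' * (1 + ‖k‖) ^ N * ∑ j ∈ Finset.range (N + 1), ‖iteratedFDeriv ℝ j φ x‖) := by
        gcongr
        exact h' k φ hφ.smooth i hi x
    _ = C' * (1 + ‖k‖) ^ N *
        (‖x‖ ^ j * ∑ j ∈ Finset.range (N + 1), ‖iteratedFDeriv ℝ j φ x‖) := by ring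
    _ ≤ _ := by gcongr; exact hb j hj x

end growth

section elliptic
variable {n m : ℕ}

/-- `F` acts on modulated test functions `φ e^{-i⟨·,k⟩}` as multiplication by the principal
symbol `s k`, up to terms of order at most one in `k`. -/
def HasSymbol (F : (Vec n → ℂ) → Vec n → ℂ) (s : Vec n → ℂ) : Prop :=
  ∀ φ : Vec n → ℂ, IsTest φ → ∃ (a : Fin n → Vec n → ℂ) (b : Vec n → ℂ),
    (∀ μ, IsTest (a μ)) ∧ IsTest b ∧ ∀ k x,
      F (fun y => φ y * planeWave k y) x
        = s k * (φ x * planeWave k x) + ∑ μ, (k μ : ℂ) * (a μ x * planeWave k x)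
          + b x * planeWave k x

lemma HasSymbol.add {F G : (Vec n → ℂ) → Vec n → ℂ} {s t : Vec n → ℂ} (hF : HasSymbol F s)
    (hG : HasSymbol G t) : HasSymbol (fun χ x => F χ x + G χ x) (fun k => s k + t k) := by
  intro φ hφ
  obtain ⟨a, b, ha, hb, h⟩ := hF φ hφ
  obtain ⟨a', b', ha', hb', h'⟩ := hG φ hφ
  refine ⟨fun μ x => a μ x + a' μ x, fun x => b x + b' x, fun μ => (ha μ).add (ha' μ),
    hb.add hb', fun k x => ?_⟩
  simp only [h k x, h' k x, add_mul, mul_add, Finset.sum_add_distrib]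
  ring

lemma HasSymbol.zero : HasSymbol (fun (_ : Vec n → ℂ) (_ : Vec n) => 0) 0 := fun φ _ =>
  ⟨fun _ _ => 0, fun _ => 0, fun _ => IsTest.zero, IsTest.zero, fun k x => by simp⟩

lemma HasSymbol.sum {ι : Type*} (I : Finset ι) {F : ι → (Vec n → ℂ) → Vec n → ℂ}
    {s : ι → Vec n → ℂ} (h : ∀ i, HasSymbol (F i) (s i)) :
    HasSymbol (fun χ x => ∑ i ∈ I, F i χ x) (fun k => ∑ i ∈ I, s i k) := by
  classical
  induction I using Finset.induction_on with
  | empty =>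
    simp only [Finset.sum_empty]
    exact HasSymbol.zero
  | insert i I hi ih =>
    simp only [Finset.sum_insert hi]
    exact (h i).add ih

lemma hasSymbol_order_zero {L : Vec n → ℂ} (hL : ContDiff ℝ (⊤ : ℕ∞) L) :
    HasSymbol (fun χ x => L x * χ x) 0 := fun φ hφ =>
  ⟨fun _ _ => 0, fun x => L x * φ x, fun _ => IsTest.zero, IsTest.smooth_mul hL hφ,
    fun k x => by simp; ring⟩

lemma hasSymbol_order_one {K : Vec n → ℂ} (hK : ContDiff ℝ (⊤ : ℕ∞) K) (μ : Fin n) :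
    HasSymbol (fun χ x => -sdirD μ (fun y => K y * χ y) x) 0 := by
  intro φ hφ
  have hKφ := IsTest.smooth_mul hK hφ
  refine ⟨fun ν x => if ν = μ then Complex.I * (K x * φ x) else 0,
    fun x => -1 * sdirD μ (fun y => K y * φ y) x, fun ν => ?_, (hKφ.sdirD μ).const_mul _,
    fun k x => ?_⟩
  · by_cases h : ν = μ
    · simpa [h] using hKφ.const_mul _
    · simpa [h] using IsTest.zero
  · have e : (fun y => K y * (φ y * planeWave k y)) = fun y => (K y * φ y) * planeWave k y := by
      funext y; ring
    simp only [e]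
    rw [sdirD_mul_planeWave μ k hKφ.smooth]
    simp
    ring

lemma hasSymbol_order_two (c : ℂ) (μ : Fin n) :
    HasSymbol (fun χ x => sdirD μ (sdirD μ fun y => c * χ y) x)
      (fun k => -c * (k μ : ℂ) ^ 2) := by
  intro φ hφ
  refine ⟨fun ν x => if ν = μ then (-2 * c * Complex.I) * sdirD μ φ x else 0,
    fun x => c * sdirD μ (sdirD μ φ) x, fun ν => ?_, ((hφ.sdirD μ).sdirD μ).const_mul _,
    fun k x => ?_⟩
  · by_cases h : ν = μ
    · simp only [h, if_true]
      exact (hφ.sdirD μ).const_mul _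
    · simpa [h] using IsTest.zero
  · have hw := isTest_wave hφ k
    have hw' := isTest_wave (hφ.sdirD μ) k
    beta_reduce
    rw [sdirD_const_mul μ c hw.smooth, sdirD_const_mul μ c (hw.sdirD μ).smooth,
      sdirD_mul_planeWave μ k hφ.smooth, sdirD_add μ (hw.const_mul _).smooth hw'.smooth,
      sdirD_const_mul μ _ hw.smooth, sdirD_mul_planeWave μ k hφ.smooth,
      sdirD_mul_planeWave μ k (hφ.sdirD μ).smooth]
    simp only [ite_mul, zero_mul, mul_ite, mul_zero, Finset.sum_ite_eq', Finset.mem_univ, if_true]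
    linear_combination (c * k μ ^ 2 * (φ x * planeWave k x)) * Complex.I_sq

/-- Microlocal elliptic regularity: if `P u` is smooth and the principal symbol of `P` is scalar
and bounded below by `c‖k‖²`, then localised Fourier transforms of `u` decay rapidly.  Testing
`P u` against `φ e^{-i⟨·,k⟩}` expresses `p(k) û(k)` through terms of order one in `k`, which
gains one power of decay at each step. -/
lemma elliptic_decay (u : Fin m → TD n) (P : DOp n m) (r : Fin m → Vec n → ℂ)
    (hr : ∀ j, ContDiff ℝ (⊤ : ℕ∞) (r j))
    (hu : ∀ j χ, IsTest χ → ∑ l, ev (u l) (transposeApp P j l χ) = ∫ x, r j x * χ x)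
    (p : Vec n → ℝ)
    (hp : ∀ j l, HasSymbol (transposeApp P j l) (fun k => if j = l then (p k : ℂ) else 0))
    (c : ℝ) (hc : 0 < c) (N : ℕ) (l : Fin m) (φ : Vec n → ℂ) (hφ : IsTest φ) :
    ∃ C : ℝ, ∀ k, c * ‖k‖ ^ 2 ≤ |p k| →
      ‖ev (u l) (fun x => φ x * planeWave k x)‖ * (1 + ‖k‖) ^ N ≤ C := by
  choose M hM using fun l => ev_wave_growth (u l)
  let M0 := ∑ l, M l
  -- `û = O(|k|^(M0 - N))` for all test functions, by induction on `N`
  have key : ∀ N : ℕ, ∀ φ : Vec n → ℂ, IsTest φ → ∃ C : ℝ, 0 ≤ C ∧ ∀ l k, c * ‖k‖ ^ 2 ≤ |p k| →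
      ‖ev (u l) (fun x => φ x * planeWave k x)‖ * (1 + ‖k‖) ^ N ≤ C * (1 + ‖k‖) ^ M0 := by
    intro N
    induction N with
    | zero =>
      intro φ hφ
      choose C hC0 hC using fun l => hM l φ hφ
      refine ⟨∑ l, C l, Finset.sum_nonneg fun l _ => hC0 l, fun l k _ => ?_⟩
      rw [pow_zero, mul_one]
      refine (hC l k).trans (mul_le_mul ?_ (pow_le_pow_right₀ (by simp) ?_) (by positivity)
        (Finset.sum_nonneg fun l _ => hC0 l))
      · exact Finset.single_le_sum (fun l _ => hC0 l) (Finset.mem_univ l)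
      · exact Finset.single_le_sum (f := M) (fun l _ => Nat.zero_le _) (Finset.mem_univ l)
    | succ N ih =>
      intro φ hφ
      choose a b ha hb hab using fun j l => hp j l φ hφ
      choose Ca hCa0 hCa using fun j l μ => ih (a j l μ) (ha j l μ)
      choose Cb hCb0 hCb using fun j l => ih (b j l) (hb j l)
      obtain ⟨C0, hC00, hC0⟩ := ih φ hφ
      choose Cr hCr using fun j => integral_wave_decay N (IsTest.smooth_mul (hr j) hφ)
      let R : Fin m → ℝ := fun j => |Cr j| + ∑ l, (∑ μ, Ca j l μ + Cb j l)
      have hR : ∀ j, 0 ≤ R j := fun j => add_nonneg (abs_nonneg _) <|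
        Finset.sum_nonneg fun l _ => add_nonneg (Finset.sum_nonneg fun μ _ => hCa0 j l μ)
          (hCb0 j l)
      -- the defining equation, tested against the modulated function
      have eqn : ∀ j k, (p k : ℂ) * ev (u j) (fun x => φ x * planeWave k x)
          = (∫ x, (r j x * φ x) * planeWave k x)
            - ∑ l, (∑ μ, (k μ : ℂ) * ev (u l) (fun x => a j l μ x * planeWave k x)
              + ev (u l) (fun x => b j l x * planeWave k x)) := by
        intro j k
        have h1 := hu j _ (isTest_wave hφ k)
        have h2 : ∀ l, ev (u l) (transposeApp P j l fun x => φ x * planeWave k x)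
            = (if j = l then (p k : ℂ) else 0) * ev (u l) (fun x => φ x * planeWave k x)
              + (∑ μ, (k μ : ℂ) * ev (u l) (fun x => a j l μ x * planeWave k x)
              + ev (u l) (fun x => b j l x * planeWave k x)) := by
          intro l
          have t1 : IsTest fun x => (if j = l then (p k : ℂ) else 0) * (φ x * planeWave k x) :=
            (isTest_wave hφ k).const_mul _
          have t2 : ∀ μ ∈ Finset.univ, IsTest fun x => (k μ : ℂ) * (a j l μ x * planeWave k x) :=
            fun μ _ => (isTest_wave (ha j l μ) k).const_mul _
          have t3 := isTest_wave (hb j l) k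
          rw [show (transposeApp P j l fun x => φ x * planeWave k x) = _ from
            funext fun x => hab j l k x, ev_add _ (t1.add (IsTest.sum _ t2)) t3,
            ev_add _ t1 (IsTest.sum _ t2), ev_sum _ _ t2, ev_const_mul _ _ (isTest_wave hφ k)]
          rw [add_assoc]
          congr 2
          exact Finset.sum_congr rfl fun μ _ => ev_const_mul _ _ (isTest_wave (ha j l μ) k)
        simp_rw [h2, Finset.sum_add_distrib, ite_mul, zero_mul] at h1
        rw [Finset.sum_ite_eq] at h1
        simp only [Finset.mem_univ, if_true] at h1
        simp_rw [Finset.sum_add_distrib, mul_assoc]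
        linear_combination h1
      -- hence `|p k| |û|` is controlled
      have bound : ∀ j k, c * ‖k‖ ^ 2 ≤ |p k| →
          c * ‖k‖ ^ 2 * ‖ev (u j) (fun x => φ x * planeWave k x)‖ * (1 + ‖k‖) ^ N
            ≤ R j * (1 + ‖k‖) ^ (M0 + 1) := by
        intro j k hk
        have hk1 : 1 ≤ 1 + ‖k‖ := by simp
        have b1 : ‖∫ x, (r j x * φ x) * planeWave k x‖ * (1 + ‖k‖) ^ N
            ≤ |Cr j| * (1 + ‖k‖) ^ (M0 + 1) :=
          ((hCr j k).trans (le_abs_self _)).trans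
            (le_mul_of_one_le_right (abs_nonneg _) (one_le_pow₀ hk1))
        have b2 : ∀ l, ‖∑ μ, (k μ : ℂ) * ev (u l) (fun x => a j l μ x * planeWave k x)
              + ev (u l) (fun x => b j l x * planeWave k x)‖ * (1 + ‖k‖) ^ N
            ≤ (∑ μ, Ca j l μ + Cb j l) * (1 + ‖k‖) ^ (M0 + 1) := by
          intro l
          calc _ ≤ (∑ μ, ‖k μ‖ * ‖ev (u l) (fun x => a j l μ x * planeWave k x)‖
                + ‖ev (u l) (fun x => b j l x * planeWave k x)‖) * (1 + ‖k‖) ^ N := by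
                gcongr
                refine (norm_add_le _ _).trans (add_le_add_left ?_ _)
                refine (norm_sum_le _ _).trans (le_of_eq ?_)
                exact Finset.sum_congr rfl fun μ _ => by rw [norm_mul, Complex.norm_real]
            _ = ∑ μ, ‖k μ‖ * (‖ev (u l) (fun x => a j l μ x * planeWave k x)‖ * (1 + ‖k‖) ^ N)
                + ‖ev (u l) (fun x => b j l x * planeWave k x)‖ * (1 + ‖k‖) ^ N := by
                rw [add_mul, Finset.sum_mul]
                simp_rw [mul_assoc]
            _ ≤ ∑ μ, (1 + ‖k‖) * (Ca j l μ * (1 + ‖k‖) ^ M0)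
                + Cb j l * (1 + ‖k‖) ^ (M0 + 1) := by
                refine add_le_add (Finset.sum_le_sum fun μ _ => ?_) ?_
                · refine mul_le_mul ?_ (hCa j l μ l k hk) (by positivity) (by positivity)
                  linarith [norm_le_pi_norm k μ]
                · refine (hCb j l l k hk).trans ?_
                  exact mul_le_mul_of_nonneg_left (pow_le_pow_right₀ hk1 (by omega)) (hCb0 j l)
            _ = _ := by
                rw [add_mul, Finset.sum_mul]
                congr 1
                exact Finset.sum_congr rfl fun μ _ => by ring
        calc _ ≤ ‖(p k : ℂ) * ev (u j) (fun x => φ x * planeWave k x)‖ * (1 + ‖k‖) ^ N := by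
              rw [norm_mul, Complex.norm_real, Real.norm_eq_abs]
              gcongr
          _ ≤ (‖∫ x, (r j x * φ x) * planeWave k x‖
              + ∑ l, ‖∑ μ, (k μ : ℂ) * ev (u l) (fun x => a j l μ x * planeWave k x)
              + ev (u l) (fun x => b j l x * planeWave k x)‖) * (1 + ‖k‖) ^ N := by
              rw [eqn]
              gcongr
              refine (norm_sub_le _ _).trans ?_
              gcongr
              exact norm_sum_le _ _
          _ ≤ _ := by
              simp only [R]
              rw [add_mul, add_mul, Finset.sum_mul, Finset.sum_mul]
              exact add_le_add b1 (Finset.sum_le_sum fun l _ => b2 l)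
      refine ⟨∑ j, (2 * (R j / c) + 2 * C0), Finset.sum_nonneg fun j _ => ?_, fun j k hk => ?_⟩
      · have := hR j; positivity
      have hk1 : 1 ≤ 1 + ‖k‖ := by simp
      set X := ‖ev (u j) (fun x => φ x * planeWave k x)‖ * (1 + ‖k‖) ^ N with hX
      have hX0 : 0 ≤ X := by positivity
      have i1 : ‖k‖ ^ 2 * X ≤ R j / c * (1 + ‖k‖) ^ (M0 + 1) := by
        have := bound j k hk
        rw [div_mul_eq_mul_div, le_div_iff₀ hc]
        calc _ = c * ‖k‖ ^ 2 * ‖ev (u j) (fun x => φ x * planeWave k x)‖ * (1 + ‖k‖) ^ N := by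
              rw [hX]; ring
          _ ≤ _ := this
      have i2 : X ≤ C0 * (1 + ‖k‖) ^ (M0 + 1) := (hC0 j k hk).trans
        (mul_le_mul_of_nonneg_left (pow_le_pow_right₀ hk1 (by omega)) hC00)
      have i3 : (1 + ‖k‖) ^ 2 * X ≤ (2 * (R j / c) + 2 * C0) * (1 + ‖k‖) ^ (M0 + 1) := by
        nlinarith [mul_nonneg (sq_nonneg (1 - ‖k‖)) hX0]
      have i4 : (1 + ‖k‖) * X ≤ (2 * (R j / c) + 2 * C0) * (1 + ‖k‖) ^ M0 := by
        refine le_of_mul_le_mul_left ?_ (show 0 < 1 + ‖k‖ by positivity)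
        calc _ = (1 + ‖k‖) ^ 2 * X := by ring
          _ ≤ _ := i3
          _ = _ := by ring
      calc _ = (1 + ‖k‖) * X := by rw [hX]; ring
        _ ≤ _ := i4
        _ ≤ _ := by
          gcongr
          exact Finset.single_le_sum (f := fun j => 2 * (R j / c) + 2 * C0)
            (fun j _ => by have := hR j; positivity) (Finset.mem_univ j)
  obtain ⟨C, -, hC⟩ := key (N + M0) φ hφ
  refine ⟨C, fun k hk => ?_⟩
  have h := hC l k hk
  rw [pow_add, ← mul_assoc] at h
  exact le_of_mul_le_mul_right h (by positivity)

end elliptic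

/-! ### Lifting operators to more variables -/

section compose
variable {n m : ℕ}

/-- The formal transpose reverses composition.  Both sides are continuous and have the same
integral against every test function, by the duality `integral_app_mul`. -/
lemma transposeApp_comp {A B P : DOp n m} (hA : A.Smooth) (hB : B.Smooth) (hP : P.Smooth)
    (h : ∀ f : Vec n → Fin m → ℂ, (∀ j, ContDiff ℝ (⊤ : ℕ∞) fun x => f x j) →
      ∀ x j, P.app f x j = B.app (A.app f) x j)
    (j l : Fin m) {χ : Vec n → ℂ} (hχ : IsTest χ) :
    transposeApp P j l χ = fun x => ∑ i, transposeApp A i l (transposeApp B j i χ) x := by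
  have hT1 : IsTest (transposeApp P j l χ) := transposeApp_test hP j l hχ
  have hTB : ∀ i, IsTest (transposeApp B j i χ) := fun i => transposeApp_test hB j i hχ
  have hTA : ∀ i ∈ Finset.univ, IsTest (transposeApp A i l (transposeApp B j i χ)) :=
    fun i _ => transposeApp_test hA i l (hTB i)
  have hT2 := IsTest.sum Finset.univ hTA
  have hdual : ∀ g : Vec n → ℝ, ContDiff ℝ (⊤ : ℕ∞) g → HasCompactSupport g →
      ∫ x, g x • (transposeApp P j l χ x
        - ∑ i, transposeApp A i l (transposeApp B j i χ) x) = 0 := by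
    intro g hg _
    have hgc : ContDiff ℝ (⊤ : ℕ∞) fun x => (g x : ℂ) := Complex.ofRealCLM.contDiff.comp hg
    let hh : Vec n → Fin m → ℂ := fun x l' => if l' = l then (g x : ℂ) else 0
    have hhs : ∀ l', ContDiff ℝ (⊤ : ℕ∞) fun x => hh x l' := by
      intro l'
      by_cases hl : l' = l
      · simpa [hh, hl] using hgc
      · simpa [hh, hl] using contDiff_const
    have single : ∀ F : Fin m → Vec n → ℂ, ∑ l', ∫ x, hh x l' * F l' x = ∫ x, (g x : ℂ) * F l x := by
      intro F
      rw [Finset.sum_eq_single l]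
      · simp [hh]
      · intro b _ hb
        simp [hh, hb]
      · simp
    have e1 : ∫ x, P.app hh x j * χ x = ∫ x, (g x : ℂ) * transposeApp P j l χ x := by
      rw [integral_app_mul hP hhs j hχ, single]
    have e2 : ∫ x, B.app (A.app hh) x j * χ x
        = ∑ i, ∫ x, (g x : ℂ) * transposeApp A i l (transposeApp B j i χ) x := by
      rw [integral_app_mul hB (DOp.app_smooth hA hhs) j hχ]
      refine Finset.sum_congr rfl fun i _ => ?_
      rw [integral_app_mul hA hhs i (hTB i), single]
    have e3 : ∫ x, P.app hh x j * χ x = ∫ x, B.app (A.app hh) x j * χ x := by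
      simp_rw [h hh hhs]
    have i1 : Integrable fun x => (g x : ℂ) * transposeApp P j l χ x :=
      (IsTest.smooth_mul hgc hT1).integrable
    have i2 : ∀ i ∈ Finset.univ, Integrable fun x =>
        (g x : ℂ) * transposeApp A i l (transposeApp B j i χ) x :=
      fun i hi => (IsTest.smooth_mul hgc (hTA i hi)).integrable
    simp_rw [Complex.real_smul, mul_sub, Finset.mul_sum]
    rw [integral_sub i1 (integrable_finsetSum _ i2), integral_finsetSum _ i2, ← e1, ← e2, e3,
      sub_self]
  have hcont := hT1.smooth.continuous.sub hT2.smooth.continuous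
  have h0 := ae_eq_zero_of_integral_contDiff_smul_eq_zero hcont.locallyIntegrable hdual
  have h1 := Continuous.ae_eq_iff_eq volume hcont continuous_const |>.1 h0
  funext x
  exact sub_eq_zero.1 (congrFun h1 x)

end compose

section lift
variable {n p m : ℕ}

/-- The affine map `ℝ^n → ℝ^p` whose `em μ`-th component is `e μ * y μ` and whose remaining
components are those of `z`. -/
def insertCoord (e : Fin n → ℝ) (em : Fin n → Fin p) (z : Vec p) (y : Vec n) : Vec p :=
  z + ∑ μ, (e μ * y μ - z (em μ)) • Pi.single (em μ) (1 : ℝ)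

/-- Lift of an operator on `ℝ^n` to `ℝ^p`, acting in the variables selected by `em` after the
coordinate change `y μ ↦ e μ * y μ` (where `e μ = ±1`). -/
def glift (e : Fin n → ℝ) (em : Fin n → Fin p) (A : DOp n m) : DOp p m :=
  A.map fun t => (fun z j l => (((t.2.map e).prod : ℝ) : ℂ) * t.1 (fun μ => e μ * z (em μ)) j l,
    t.2.map em)

variable {e : Fin n → ℝ} {em : Fin n → Fin p}

lemma insertCoord_apply (hem : Function.Injective em) (z : Vec p) (y : Vec n) (ν : Fin n) :
    insertCoord e em z y (em ν) = e ν * y ν := by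
  simp only [insertCoord, Pi.add_apply, Finset.sum_apply, Pi.smul_apply, smul_eq_mul]
  rw [Finset.sum_eq_single ν]
  · simp
  · intro b _ hb
    rw [Pi.single_eq_of_ne (fun h => hb (hem h).symm), mul_zero]
  · simp

lemma insertCoord_self (he : ∀ μ, e μ * e μ = 1) (z : Vec p) :
    insertCoord e em z (fun μ => e μ * z (em μ)) = z := by
  simp [insertCoord, ← mul_assoc, he]

lemma insertCoord_smooth (z : Vec p) : ContDiff ℝ (⊤ : ℕ∞) (insertCoord e em z) := by
  unfold insertCoord
  fun_prop

lemma sdirD_insertCoord (z : Vec p) (y : Vec n) (μ : Fin n) {f : Vec p → ℂ}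
    (hf : ContDiff ℝ (⊤ : ℕ∞) f) :
    sdirD μ (fun y => f (insertCoord e em z y)) y
      = e μ * sdirD (em μ) f (insertCoord e em z y) := by
  have h1 : HasFDerivAt (insertCoord e em z)
      (∑ ν, ((e ν) • (ContinuousLinearMap.proj ν : Vec n →L[ℝ] ℝ)).smulRight
        (Pi.single (em ν) (1 : ℝ) : Vec p)) y := by
    unfold insertCoord
    refine HasFDerivAt.const_add _ (HasFDerivAt.fun_sum fun ν _ => ?_)
    exact HasFDerivAt.smul_const
      (((ContinuousLinearMap.proj ν : Vec n →L[ℝ] ℝ).hasFDerivAt.const_mul _).sub_const _) _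
  have h2 := (smooth_diffAt hf (insertCoord e em z y)).hasFDerivAt.comp y h1
  unfold sdirD
  rw [show (fun y => f (insertCoord e em z y)) = f ∘ insertCoord e em z from rfl, h2.fderiv]
  simp only [ContinuousLinearMap.comp_apply, _root_.sum_apply,
    ContinuousLinearMap.smulRight_apply, _root_.smul_apply, ContinuousLinearMap.proj_apply]
  rw [Finset.sum_eq_single μ]
  · simp
  · intro b _ hb
    simp [Pi.single_eq_of_ne hb]
  · simp

lemma multiDeriv_insertCoord (z : Vec p) (w : List (Fin n)) {f : Vec p → ℂ}
    (hf : ContDiff ℝ (⊤ : ℕ∞) f) (y : Vec n) :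
    multiDeriv w (fun y => f (insertCoord e em z y)) y
      = (((w.map e).prod : ℝ) : ℂ) * multiDeriv (w.map em) f (insertCoord e em z y) := by
  induction w generalizing y with
  | nil => simp [multiDeriv]
  | cons μ w ih =>
    have hs := multiDeriv_smooth (w.map em) hf
    have e1 : multiDeriv w (fun y => f (insertCoord e em z y)) = fun y =>
        (((w.map e).prod : ℝ) : ℂ) * multiDeriv (w.map em) f (insertCoord e em z y) :=
      funext ih
    change sdirD μ (multiDeriv w fun y => f (insertCoord e em z y)) y = _
    rw [e1, sdirD_const_mul μ _ (f := fun y => multiDeriv (w.map em) f (insertCoord e em z y))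
      (hs.comp (insertCoord_smooth z))]
    beta_reduce
    rw [sdirD_insertCoord z y μ hs]
    simp only [List.map_cons, List.prod_cons, multiDeriv, Complex.ofReal_mul]
    ring

/-- Restricted to a slice, the lifted operator is the original one. -/
lemma glift_app (he : ∀ μ, e μ * e μ = 1) (hem : Function.Injective em) (A : DOp n m)
    {h : Vec p → Fin m → ℂ} (hh : ∀ j, ContDiff ℝ (⊤ : ℕ∞) fun x => h x j) (z : Vec p)
    (y : Vec n) (j : Fin m) :
    (glift e em A).app h (insertCoord e em z y) j
      = A.app (fun y => h (insertCoord e em z y)) y j := by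
  unfold DOp.app glift
  rw [List.map_map]
  congr 1
  refine List.map_congr_left fun t _ => Finset.sum_congr rfl fun l _ => ?_
  simp only
  rw [multiDeriv_insertCoord z t.2 (hh l) y]
  have : (fun μ => e μ * insertCoord e em z y (em μ)) = y := by
    funext μ
    rw [insertCoord_apply hem, ← mul_assoc, he, one_mul]
  rw [this]
  ring

lemma glift_smooth {A : DOp n m} (hA : A.Smooth) : (glift e em A).Smooth := by
  intro t ht j l
  obtain ⟨s, hs, rfl⟩ := List.mem_map.1 ht
  have h1 : ContDiff ℝ (⊤ : ℕ∞) fun z : Vec p => (fun μ => e μ * z (em μ) : Vec n) := by fun_prop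
  exact contDiff_const.mul ((hA s hs j l).comp h1)

lemma glift_comp (he : ∀ μ, e μ * e μ = 1) (hem : Function.Injective em) {A B P : DOp n m}
    (hA : A.Smooth)
    (h : ∀ f : Vec n → Fin m → ℂ, (∀ j, ContDiff ℝ (⊤ : ℕ∞) fun x => f x j) →
      ∀ x j, P.app f x j = B.app (A.app f) x j)
    (f : Vec p → Fin m → ℂ) (hf : ∀ j, ContDiff ℝ (⊤ : ℕ∞) fun x => f x j) (z : Vec p)
    (j : Fin m) :
    (glift e em P).app f z j = (glift e em B).app ((glift e em A).app f) z j := by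
  rw [← insertCoord_self (em := em) he z]
  rw [glift_app he hem P hf, glift_app he hem B (DOp.app_smooth (glift_smooth hA) hf),
    h (fun y => f (insertCoord e em z y)) fun j => (hf j).comp (insertCoord_smooth z)]
  congr 2
  funext y
  funext i
  rw [glift_app he hem A hf]

end lift

section normhyp
variable {d m p : ℕ}

/-- The normally hyperbolic operator with lower-order coefficients `K` and `L`. -/
def nhOp (K : Fin (d+1) → Vec (d+1) → Fin m → Fin m → ℂ) (L : Vec (d+1) → Fin m → Fin m → ℂ) :
    DOp (d+1) m :=
  [((fun _ j l => if j = l then -1 else 0), [0, 0])]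
    ++ (List.finRange d).map (fun i => ((fun _ j l => if j = l then 1 else 0), [i.succ, i.succ]))
    ++ (List.finRange (d+1)).map (fun μ => (K μ, [μ]))
    ++ [(L, [])]

variable {K : Fin (d+1) → Vec (d+1) → Fin m → Fin m → ℂ} {L : Vec (d+1) → Fin m → Fin m → ℂ}

lemma nhOp_smooth (hK : ∀ μ j l, ContDiff ℝ (⊤ : ℕ∞) fun x => K μ x j l)
    (hL : ∀ j l, ContDiff ℝ (⊤ : ℕ∞) fun x => L x j l) : (nhOp K L).Smooth := by
  intro t ht j l
  simp only [nhOp, List.mem_append, List.mem_map, List.mem_singleton] at ht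
  rcases ht with ((rfl | ⟨i, -, rfl⟩) | ⟨μ, -, rfl⟩) | rfl
  · exact contDiff_const
  · exact contDiff_const
  · exact hK μ j l
  · exact hL j l

lemma nhOp_app (f : Vec (d+1) → Fin m → ℂ) (x : Vec (d+1)) (j : Fin m) :
    (nhOp K L).app f x j =
      -(sdirD 0 (sdirD 0 fun y => f y j) x)
        + (∑ i : Fin d, sdirD i.succ (sdirD i.succ fun y => f y j) x)
        + (∑ μ, ∑ l, K μ x j l * sdirD μ (fun y => f y l) x)
        + ∑ l, L x j l * f x l := by
  simp [DOp.app, nhOp, List.map_map, Function.comp_def, ← Fin.sum_univ_def, multiDeriv, add_assoc]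

lemma transposeApp_append {n : ℕ} (A B : DOp n m) (j l : Fin m) (χ : Vec n → ℂ) (x : Vec n) :
    transposeApp (A ++ B) j l χ x = transposeApp A j l χ x + transposeApp B j l χ x := by
  simp [transposeApp]

lemma transposeApp_finRange {n q : ℕ}
    (T : Fin q → (Vec n → Fin m → Fin m → ℂ) × List (Fin n)) (j l : Fin m)
    (χ : Vec n → ℂ) (x : Vec n) :
    transposeApp ((List.finRange q).map T) j l χ x = ∑ i, transposeApp [T i] j l χ x := by
  simp [transposeApp, List.map_map, Function.comp_def, ← Fin.sum_univ_def]

/-- A lifted normally hyperbolic operator has scalar principal symbol `k₀² - |𝐤|²`, where the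
components of the wave vector are those selected by `em`. -/
lemma nhOp_hasSymbol (hK : ∀ μ j l, ContDiff ℝ (⊤ : ℕ∞) fun x => K μ x j l)
    (hL : ∀ j l, ContDiff ℝ (⊤ : ℕ∞) fun x => L x j l) {e : Fin (d+1) → ℝ}
    (he : ∀ μ, e μ * e μ = 1) (em : Fin (d+1) → Fin p) (j l : Fin m) :
    HasSymbol (transposeApp (glift e em (nhOp K L)) j l)
      (fun k => if j = l then ((k (em 0) ^ 2 - ∑ i : Fin d, k (em i.succ) ^ 2 : ℝ) : ℂ)
        else 0) := by
  have hpi : ContDiff ℝ (⊤ : ℕ∞) fun z : Vec p => (fun μ => e μ * z (em μ) : Vec (d+1)) := by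
    fun_prop
  have hec : ∀ μ, (e μ : ℂ) * e μ = 1 := fun μ => by exact_mod_cast he μ
  have h0 := hasSymbol_order_two (n := p) (if j = l then -1 else 0) (em 0)
  have h1 := HasSymbol.sum Finset.univ fun i : Fin d =>
    hasSymbol_order_two (n := p) (if j = l then 1 else 0) (em i.succ)
  have h2 := HasSymbol.sum Finset.univ fun μ : Fin (d+1) => hasSymbol_order_one
    (K := fun z : Vec p => (e μ : ℂ) * K μ (fun μ => e μ * z (em μ)) j l)
    (contDiff_const.mul ((hK μ j l).comp hpi)) (em μ)
  have h3 := hasSymbol_order_zero (L := fun z : Vec p => L (fun μ => e μ * z (em μ)) j l)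
    ((hL j l).comp hpi)
  have H := ((h0.add h1).add h2).add h3
  convert H using 1
  · funext χ x
    simp only [glift, nhOp, List.map_append, List.map_map, transposeApp_append,
      transposeApp_finRange]
    simp [transposeApp, multiDeriv, hec]
  · funext k
    by_cases hjl : j = l <;> simp [hjl, sub_eq_add_neg]

end normhyp

section lifted_elliptic
variable {d m p : ℕ}

/-- If a prenormally hyperbolic operator `D`, lifted to the variables selected by `em`, maps `u`
to a smooth function, then `u` is rapidly decreasing in directions where the lifted wave
operator is elliptic: compose with the lift of `D'` to reduce to a normally hyperbolic
operator. -/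
lemma prenormal_decay {D : DOp (d+1) m} (hDs : D.Smooth) (hD : IsPrenormallyHyp d m D)
    {e : Fin (d+1) → ℝ} (he : ∀ μ, e μ * e μ = 1) {em : Fin (d+1) → Fin p}
    (hem : Function.Injective em) (u : Fin m → TD p) (f : Vec p → Fin m → ℂ)
    (hf : ∀ j, ContDiff ℝ (⊤ : ℕ∞) fun x => f x j)
    (hu : ∀ j χ, IsTest χ →
      ∑ l, ev (u l) (transposeApp (glift e em D) j l χ) = ∫ x, f x j * χ x)
    (c : ℝ) (hc : 0 < c) (N : ℕ) (l : Fin m) (φ : Vec p → ℂ) (hφ : IsTest φ) :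
    ∃ C : ℝ, ∀ k, c * ‖k‖ ^ 2 ≤ |k (em 0) ^ 2 - ∑ i : Fin d, k (em i.succ) ^ 2| →
      ‖ev (u l) (fun x => φ x * planeWave k x)‖ * (1 + ‖k‖) ^ N ≤ C := by
  obtain ⟨D', hD's, -, K, L, hK, hL, hnh⟩ := hD
  have hcomp : ∀ f : Vec (d+1) → Fin m → ℂ, (∀ j, ContDiff ℝ (⊤ : ℕ∞) fun x => f x j) →
      ∀ x j, (nhOp K L).app f x j = D'.app (D.app f) x j := fun f hf x j => by
    rw [nhOp_app]
    exact (hnh f hf x j).symm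
  have sP := glift_smooth (e := e) (em := em) (nhOp_smooth hK hL)
  have sA := glift_smooth (e := e) (em := em) hDs
  have sB := glift_smooth (e := e) (em := em) hD's
  refine elliptic_decay u (glift e em (nhOp K L))
    (fun j x => (glift e em D').app f x j) (DOp.app_smooth sB hf) (fun j χ hχ => ?_) _
    (nhOp_hasSymbol hK hL he em) c hc N l φ hφ
  have hT := fun l => transposeApp_comp sA sB sP (glift_comp he hem hDs hcomp) j l hχ
  have hTB : ∀ i, IsTest (transposeApp (glift e em D') j i χ) :=
    fun i => transposeApp_test sB j i hχ
  simp_rw [hT]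
  have h1 : ∀ l, ev (u l) (fun x => ∑ i, transposeApp (glift e em D) i l
      (transposeApp (glift e em D') j i χ) x) = ∑ i, ev (u l) (transposeApp (glift e em D) i l
      (transposeApp (glift e em D') j i χ)) :=
    fun l => ev_sum _ _ fun i _ => transposeApp_test sA i l (hTB i)
  simp_rw [h1]
  rw [Finset.sum_comm, integral_app_mul sB hf j hχ]
  exact Finset.sum_congr rfl fun i _ => hu i _ (hTB i)

end lifted_elliptic

section liftOp
variable {d m : ℕ}

/-- For time-independent coefficients, replacing `∂_s` by `-∂_s` is the same as reflecting time, since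
the coefficients do not see the reflection. -/
lemma liftOp_eq_glift (sgn : Bool) (em : Fin (d+1) → Fin (2*d+1)) {D : DOp (d+1) m}
    (hD : D.TimeIndep) :
    liftOp sgn em D = glift (fun μ => if sgn = true ∧ μ = 0 then -1 else 1) em D := by
  refine List.map_congr_left fun t ht => ?_
  refine Prod.ext ?_ rfl
  funext z j l
  cases sgn with
  | false => simp
  | true =>
    have h1 : (fun μ => (if μ = 0 then (-1 : ℝ) else 1) * z (em μ))
        = Function.update (fun μ => z (em μ)) 0 (-z (em 0)) := by
      funext μ
      by_cases h : μ = 0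
      · subst h; simp
      · simp [h]
    have h2 : ∀ w : List (Fin (d+1)),
        ((w.map fun μ => if μ = 0 then (-1 : ℝ) else 1).prod)
          = (-1) ^ w.count 0 := by
      intro w
      induction w with
      | nil => simp
      | cons a w ih =>
        rw [List.map_cons, List.prod_cons, ih]
        by_cases h : a = 0
        · subst h
          simp [pow_succ]
        · simp [h]
    simp only [true_and, if_true]
    rw [h1, hD t ht, h2]
    simp

lemma emb1_injective : Function.Injective (emb1 d) := fun a b h => by
  have := congrArg Fin.val h
  exact Fin.ext this

lemma emb2_injective : Function.Injective (emb2 d) := fun a b h => by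
  have := congrArg Fin.val h
  simp only [emb2] at this
  refine Fin.ext ?_
  split_ifs at this with h1 h2 h2 <;> simp at this <;> omega

end liftOp

/-! ### The partial Fourier transform on Schwartz functions: differentiation and multiplication -/

section partialFourier
variable {q : ℕ}

/-- Continuous seminorms on Schwartz space are stable under finite sums. -/
lemma exists_seminorm_sum {n : ℕ} {ι : Type*} (s : Finset ι)
    (p : ι → Seminorm ℂ (SchwartzMap (Vec n) ℂ)) (hp : ∀ i, Continuous (p i)) :
    ∃ P : Seminorm ℂ (SchwartzMap (Vec n) ℂ), Continuous P ∧ ∀ f, ∑ i ∈ s, p i f = P f := by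
  classical
  induction s using Finset.induction_on with
  | empty => exact ⟨0, continuous_const, fun f => rfl⟩
  | insert a s ha ih =>
    obtain ⟨P, hP, h⟩ := ih
    refine ⟨p a + P, (hp a).add hP, fun f => ?_⟩
    rw [Finset.sum_insert ha, h]
    rfl

lemma norm_le_norm_update (y : Vec (q+1)) (t : ℝ) : |t| ≤ ‖Function.update y 0 t‖ := by
  have := norm_le_pi_norm (Function.update y 0 t) 0
  simpa using this

lemma norm_exp_phase (s : ℝ) : ‖Complex.exp (-Complex.I * (s : ℂ))‖ = 1 := by
  rw [Complex.norm_exp]; simp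

/-- Schwartz functions and their derivatives are integrable along time lines, uniformly. -/
lemma slice_bound (n : ℕ) : ∃ p : Seminorm ℂ (SchwartzMap (Vec (q+1)) ℂ), Continuous p ∧
    ∀ (f : SchwartzMap (Vec (q+1)) ℂ) (y : Vec (q+1)) (t : ℝ),
      ‖iteratedFDeriv ℝ n f (Function.update y 0 t)‖ ≤ p f * (1 + t ^ 2)⁻¹ := by
  let P := (Finset.Iic ((2, n) : ℕ × ℕ)).sup
    (fun m => SchwartzMap.seminorm ℂ (E := Vec (q+1)) (F := ℂ) m.1 m.2)
  have hP : Continuous P :=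
    Seminorm.continuous_of_le (q := ∑ m ∈ Finset.Iic ((2, n) : ℕ × ℕ),
      SchwartzMap.seminorm ℂ (E := Vec (q+1)) (F := ℂ) m.1 m.2) (by
      obtain ⟨Q, hQ, h⟩ := exists_seminorm_sum (Finset.Iic ((2, n) : ℕ × ℕ))
        (fun m => SchwartzMap.seminorm ℂ (E := Vec (q+1)) (F := ℂ) m.1 m.2)
        (fun m => (schwartz_withSeminorms ℂ (Vec (q+1)) ℂ).continuous_seminorm m)
      convert hQ using 1
      funext f
      rw [← h]
      simp) (Seminorm.finset_sup_le_sum _ _)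
  refine ⟨(4 : NNReal) • P, continuous_const.mul hP, fun f y t => ?_⟩
  have h := SchwartzMap.one_add_le_sup_seminorm_apply (𝕜 := ℂ) (m := (2, n)) le_rfl le_rfl f
    (Function.update y 0 t)
  have h2 : 1 + t ^ 2 ≤ (1 + ‖Function.update y 0 t‖) ^ 2 := by
    have := norm_le_norm_update y t
    have h0 := abs_nonneg t
    nlinarith [sq_abs t]
  rw [← div_eq_mul_inv, le_div_iff₀ (by positivity), mul_comm]
  refine (mul_le_mul_of_nonneg_right h2 (norm_nonneg _)).trans (h.trans (le_of_eq ?_))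
  change (2 : ℝ) ^ 2 * P f = 4 * P f
  norm_num

lemma continuous_slice {X : Type*} [TopologicalSpace X] {f : Vec (q+1) → X} (hf : Continuous f)
    (y : Vec (q+1)) : Continuous fun t : ℝ => f (Function.update y 0 t) :=
  hf.comp (continuous_const.update 0 continuous_id)

lemma integrable_slice (f : SchwartzMap (Vec (q+1)) ℂ) (y : Vec (q+1)) :
    Integrable fun t : ℝ => f (Function.update y 0 t) := by
  obtain ⟨p, -, hp⟩ := slice_bound (q := q) 0
  refine (integrable_inv_one_add_sq.const_mul (p f)).mono'
    (continuous_slice f.continuous y).aestronglyMeasurable (Filter.Eventually.of_forall fun t => ?_)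
  simpa using hp f y t

lemma integrable_phase_slice (f : SchwartzMap (Vec (q+1)) ℂ) (y : Vec (q+1)) :
    Integrable fun t : ℝ =>
      Complex.exp (-Complex.I * ((t * y 0 : ℝ) : ℂ)) * f (Function.update y 0 t) := by
  refine (integrable_slice f y).bdd_mul (c := 1) (by fun_prop)
    (Filter.Eventually.of_forall fun t => ?_)
  rw [norm_exp_phase]

/-- Multiplication by a coordinate function. -/
def coordMul (i : Fin (q+1)) : SchwartzMap (Vec (q+1)) ℂ →L[ℂ] SchwartzMap (Vec (q+1)) ℂ :=
  SchwartzMap.smulLeftCLM ℂ fun y : Vec (q+1) => ((y i : ℝ) : ℂ)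

lemma coordMul_apply (i : Fin (q+1)) (f : SchwartzMap (Vec (q+1)) ℂ) (y : Vec (q+1)) :
    coordMul i f y = (y i : ℂ) * f y := by
  have h : Function.HasTemperateGrowth fun y : Vec (q+1) => ((y i : ℝ) : ℂ) :=
    (Complex.ofRealCLM.comp (ContinuousLinearMap.proj i : Vec (q+1) →L[ℝ] ℝ)).hasTemperateGrowth
  simp [coordMul, SchwartzMap.smulLeftCLM_apply_apply h]

/-- Differentiation along a coordinate. -/
def coordDeriv (i : Fin (q+1)) : SchwartzMap (Vec (q+1)) ℂ →L[ℂ] SchwartzMap (Vec (q+1)) ℂ :=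
  LineDeriv.lineDerivOpCLM ℂ (SchwartzMap (Vec (q+1)) ℂ) (Pi.single i (1 : ℝ) : Vec (q+1))

lemma coordDeriv_apply (i : Fin (q+1)) (f : SchwartzMap (Vec (q+1)) ℂ) (y : Vec (q+1)) :
    coordDeriv i f y = fderiv ℝ f y (Pi.single i (1 : ℝ) : Vec (q+1)) := rfl

/-- The operator intertwined with the `i`-th derivative by the partial Fourier transform. -/
def pfDerivOp (i : Fin (q+1)) : SchwartzMap (Vec (q+1)) ℂ →L[ℂ] SchwartzMap (Vec (q+1)) ℂ :=
  if i = 0 then (-Complex.I) • coordMul 0 else coordDeriv i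

/-- The operator intertwined with multiplication by the `i`-th coordinate by the partial Fourier
transform. -/
def pfMulOp (i : Fin (q+1)) : SchwartzMap (Vec (q+1)) ℂ →L[ℂ] SchwartzMap (Vec (q+1)) ℂ :=
  if i = 0 then (-Complex.I) • coordDeriv 0 else coordMul i

lemma hasDerivAt_update_zero (y : Vec (q+1)) (t : ℝ) :
    HasDerivAt (fun t : ℝ => Function.update y 0 t) (Pi.single 0 1) t := by
  rw [hasDerivAt_pi]
  intro i
  by_cases h : i = 0
  · subst h; simpa using hasDerivAt_id' t
  · simpa [h] using hasDerivAt_const t (y i)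

/-- Multiplying `F₀f` by a coordinate: integration by parts when the coordinate is the frequency. -/
lemma pf_mul (i : Fin (q+1)) (f : SchwartzMap (Vec (q+1)) ℂ) (y : Vec (q+1)) :
    (y i : ℂ) * partialFourierIntegral f y = partialFourierIntegral (pfMulOp i f) y := by
  by_cases hi : i = 0
  · subst hi
    -- the derivative of the integrand below integrates to zero
    have hder : ∀ t : ℝ, HasDerivAt (fun t : ℝ =>
        Complex.exp (-Complex.I * ((t * y 0 : ℝ) : ℂ)) * f (Function.update y 0 t))
        ((-Complex.I * y 0) * (Complex.exp (-Complex.I * ((t * y 0 : ℝ) : ℂ))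
            * f (Function.update y 0 t))
          + Complex.exp (-Complex.I * ((t * y 0 : ℝ) : ℂ))
            * coordDeriv 0 f (Function.update y 0 t)) t := by
      intro t
      have h1 : HasDerivAt (fun t : ℝ => Complex.exp (-Complex.I * ((t * y 0 : ℝ) : ℂ)))
          (Complex.exp (-Complex.I * ((t * y 0 : ℝ) : ℂ)) * (-Complex.I * y 0)) t := by
        refine HasDerivAt.cexp ?_
        have := ((hasDerivAt_id t).mul_const (y 0)).ofReal_comp.const_mul (-Complex.I)
        simpa using this
      have h2 : HasDerivAt (fun t : ℝ => f (Function.update y 0 t))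
          (coordDeriv 0 f (Function.update y 0 t)) t :=
        (f.differentiableAt (x := Function.update y 0 t)).hasFDerivAt.comp_hasDerivAt t
          (hasDerivAt_update_zero y t)
      exact (h1.mul h2).congr_deriv (by ring)
    have i1 := (integrable_phase_slice f y).const_mul (-Complex.I * y 0)
    have i2 := integrable_phase_slice (coordDeriv 0 f) y
    have h0 := integral_eq_zero_of_hasDerivAt_of_integrable hder (i1.add i2)
      (integrable_phase_slice f y)
    rw [integral_add i1 i2, integral_const_mul] at h0
    have e : partialFourierIntegral (pfMulOp 0 f) y
        = -Complex.I * partialFourierIntegral (coordDeriv 0 f) y := by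
      simp only [partialFourierIntegral, pfMulOp, if_true]
      rw [← integral_const_mul]
      congr 1
      funext t
      simp
      ring
    rw [e]
    change -Complex.I * y 0 * partialFourierIntegral f y
      + partialFourierIntegral (coordDeriv 0 f) y = 0 at h0
    linear_combination Complex.I * h0 + (y 0 : ℂ) * partialFourierIntegral f y * Complex.I_sq
  · simp only [partialFourierIntegral, pfMulOp, if_neg hi]
    rw [← integral_const_mul]
    refine integral_congr_ae (Filter.Eventually.of_forall fun t => ?_)
    simp only []
    rw [coordMul_apply, Function.update_of_ne hi]
    ring

lemma pf_norm_le : ∃ p : Seminorm ℂ (SchwartzMap (Vec (q+1)) ℂ), Continuous p ∧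
    ∀ (f : SchwartzMap (Vec (q+1)) ℂ) (y : Vec (q+1)), ‖partialFourierIntegral f y‖ ≤ p f := by
  obtain ⟨p, hpc, hp⟩ := slice_bound (q := q) 0
  refine ⟨NNReal.pi • p, continuous_const.mul hpc, fun f y => ?_⟩
  have h1 : ∀ t : ℝ, ‖Complex.exp (-Complex.I * ((t * y 0 : ℝ) : ℂ))
      * f (Function.update y 0 t)‖ ≤ p f * (1 + t ^ 2)⁻¹ := fun t => by
    rw [norm_mul, norm_exp_phase, one_mul]
    simpa using hp f y t
  refine (norm_integral_le_of_norm_le (integrable_inv_one_add_sq.const_mul (p f))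
    (Filter.Eventually.of_forall h1)).trans (le_of_eq ?_)
  rw [integral_const_mul, integral_univ_inv_one_add_sq, mul_comm]
  rfl

/-- `F₀f` is differentiable, its partial derivatives being `F₀` of `pfDerivOp i f`, by differentiation
under the integral sign. -/
lemma pf_hasFDerivAt (f : SchwartzMap (Vec (q+1)) ℂ) (y : Vec (q+1)) :
    HasFDerivAt (partialFourierIntegral f)
      (∑ i, (ContinuousLinearMap.proj i : Vec (q+1) →L[ℝ] ℝ).smulRight
        (partialFourierIntegral (pfDerivOp i f) y)) y := by
  obtain ⟨p, -, hp⟩ := slice_bound (q := q) 0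
  let ph : Vec (q+1) → ℝ → ℂ := fun y t => Complex.exp (-Complex.I * ((t * y 0 : ℝ) : ℂ))
  let F' : Vec (q+1) → ℝ → Vec (q+1) →L[ℝ] ℂ := fun y t =>
    ∑ i, (ContinuousLinearMap.proj i : Vec (q+1) →L[ℝ] ℝ).smulRight
      (ph y t * pfDerivOp i f (Function.update y 0 t))
  have hupd : ∀ (t : ℝ) (y : Vec (q+1)), HasFDerivAt (fun y => Function.update y 0 t)
      (ContinuousLinearMap.pi fun i => if i = 0 then 0 else
        (ContinuousLinearMap.proj i : Vec (q+1) →L[ℝ] ℝ)) y := by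
    intro t y
    rw [hasFDerivAt_pi']
    intro i
    by_cases h : i = 0
    · subst h; simpa using hasFDerivAt_const t y
    · simp only [h, Function.update_of_ne, ne_eq, not_false_eq_true]
      refine ((ContinuousLinearMap.proj i : Vec (q+1) →L[ℝ] ℝ).hasFDerivAt
        (x := y)).congr_fderiv ?_
      ext v
      simp [h]
  have hdiff : ∀ (t : ℝ) (y : Vec (q+1)),
      HasFDerivAt (fun y => ph y t * f (Function.update y 0 t)) (F' y t) y := by
    intro t y
    have h1 : HasFDerivAt (fun y => ph y t) ((ContinuousLinearMap.proj 0 :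
        Vec (q+1) →L[ℝ] ℝ).smulRight (ph y t * (-Complex.I * t))) y := by
      have h0 : HasDerivAt (fun s : ℝ => Complex.exp (-Complex.I * ((t * s : ℝ) : ℂ)))
          (ph y t * (-Complex.I * t)) (y 0) := by
        refine HasDerivAt.cexp ?_
        have := ((hasDerivAt_id (y 0)).const_mul t).ofReal_comp.const_mul (-Complex.I)
        simpa using this
      have := h0.hasFDerivAt.comp y
        (ContinuousLinearMap.proj 0 : Vec (q+1) →L[ℝ] ℝ).hasFDerivAt
      refine this.congr_fderiv ?_
      ext v
      simp
    have h2 := (f.differentiableAt (x := Function.update y 0 t)).hasFDerivAt.comp y (hupd t y)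
    refine (h1.mul h2).congr_fderiv ?_
    ext v
    have hv : (ContinuousLinearMap.pi fun i => if i = 0 then 0 else
        (ContinuousLinearMap.proj i : Vec (q+1) →L[ℝ] ℝ)) v
        = ∑ i : Fin (q+1), (if i = 0 then 0 else v i) • (Pi.single i (1 : ℝ) : Vec (q+1)) := by
      funext j
      simp only [ContinuousLinearMap.coe_pi', Finset.sum_apply, Pi.smul_apply, Pi.single_apply,
        smul_eq_mul, mul_ite, mul_one, mul_zero, Finset.sum_ite_eq, Finset.mem_univ, if_true]
      split_ifs <;> rfl
    simp only [F', _root_.sum_apply, ContinuousLinearMap.smulRight_apply,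
      ContinuousLinearMap.proj_apply, _root_.add_apply, _root_.smul_apply,
      ContinuousLinearMap.comp_apply, hv, map_sum, map_smul, Function.comp]
    rw [Fin.sum_univ_succ, Fin.sum_univ_succ]
    simp [pfDerivOp, Fin.succ_ne_zero, coordMul_apply, coordDeriv_apply, Finset.mul_sum]
    have hs : ∑ i : Fin q, ph y t * ((v i.succ : ℂ) * fderiv ℝ f (Function.update y 0 t)
          (Pi.single i.succ (1 : ℝ) : Vec (q+1)))
        = ∑ i : Fin q, (v i.succ : ℂ) * (ph y t * fderiv ℝ f (Function.update y 0 t)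
          (Pi.single i.succ (1 : ℝ) : Vec (q+1))) :=
      Finset.sum_congr rfl fun i _ => by ring
    rw [hs]
    ring
  have hbound : ∀ (t : ℝ) (y : Vec (q+1)), ‖F' y t‖
      ≤ (∑ i, ‖(ContinuousLinearMap.proj i : Vec (q+1) →L[ℝ] ℝ)‖ * p (pfDerivOp i f))
        * (1 + t ^ 2)⁻¹ := by
    intro t y
    rw [Finset.sum_mul]
    refine (norm_sum_le _ _).trans (Finset.sum_le_sum fun i _ => ?_)
    rw [ContinuousLinearMap.norm_smulRight_apply, norm_mul, norm_exp_phase, one_mul, mul_assoc]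
    gcongr
    simpa using hp (pfDerivOp i f) y t
  have hcont : ∀ y, Continuous (F' y) := fun y => by
    refine continuous_finsetSum _ fun i _ => ?_
    have h1 : Continuous fun t => ph y t * pfDerivOp i f (Function.update y 0 t) :=
      Continuous.mul (by fun_prop) (continuous_slice (pfDerivOp i f).continuous y)
    exact ((ContinuousLinearMap.smulRightL ℝ (Vec (q+1)) ℂ
      (ContinuousLinearMap.proj i)).continuous.comp h1)
  have key := hasFDerivAt_integral_of_dominated_of_fderiv_le (μ := volume) (s := Set.univ)
    (x₀ := y) (F := fun y t => ph y t * f (Function.update y 0 t)) (F' := F')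
    Filter.univ_mem
    (Filter.Eventually.of_forall fun y => (integrable_phase_slice f y).aestronglyMeasurable)
    (integrable_phase_slice f y) (hcont y).aestronglyMeasurable
    (Filter.Eventually.of_forall fun t y _ => hbound t y)
    (integrable_inv_one_add_sq.const_mul _)
    (Filter.Eventually.of_forall fun t y _ => hdiff t y)
  refine key.congr_fderiv ?_
  rw [integral_finsetSum]
  · refine Finset.sum_congr rfl fun i _ => ?_
    exact (ContinuousLinearMap.smulRightL ℝ (Vec (q+1)) ℂ
      (ContinuousLinearMap.proj i)).integral_comp_comm (integrable_phase_slice (pfDerivOp i f) y)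
  · intro i _
    exact (ContinuousLinearMap.smulRightL ℝ (Vec (q+1)) ℂ
      (ContinuousLinearMap.proj i)).integrable_comp (integrable_phase_slice (pfDerivOp i f) y)

end partialFourier

/-! ### The partial Fourier transform as a continuous surjection of the Schwartz space -/

section partialFourierSchwartz
variable {q : ℕ}

lemma pf_pow_le (j : ℕ) : ∃ p : Seminorm ℂ (SchwartzMap (Vec (q+1)) ℂ), Continuous p ∧
    ∀ (f : SchwartzMap (Vec (q+1)) ℂ) (y : Vec (q+1)),
      ‖y‖ ^ j * ‖partialFourierIntegral f y‖ ≤ p f := by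
  induction j with
  | zero => simpa using pf_norm_le (q := q)
  | succ j ih =>
    obtain ⟨p, hpc, hp⟩ := ih
    obtain ⟨P, hPc, hP⟩ := exists_seminorm_sum (Finset.univ : Finset (Fin (q+1)))
      (fun i => p.comp (pfMulOp i).toLinearMap) (fun i => hpc.comp (pfMulOp i).continuous)
    refine ⟨P, hPc, fun f y => ?_⟩
    have hy : ‖y‖ ≤ ∑ i, |y i| := by
      rw [pi_norm_le_iff_of_nonneg (Finset.sum_nonneg fun i _ => abs_nonneg _)]
      intro i
      exact Finset.single_le_sum (f := fun i => |y i|) (fun i _ => abs_nonneg _)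
        (Finset.mem_univ i)
    calc ‖y‖ ^ (j+1) * ‖partialFourierIntegral f y‖
        = ‖y‖ * (‖y‖ ^ j * ‖partialFourierIntegral f y‖) := by ring
      _ ≤ (∑ i, |y i|) * (‖y‖ ^ j * ‖partialFourierIntegral f y‖) := by gcongr
      _ = ∑ i, ‖y‖ ^ j * ‖partialFourierIntegral (pfMulOp i f) y‖ := by
          rw [Finset.sum_mul]
          refine Finset.sum_congr rfl fun i _ => ?_
          rw [← pf_mul, norm_mul, Complex.norm_real, Real.norm_eq_abs]
          ring
      _ ≤ ∑ i, p (pfMulOp i f) := Finset.sum_le_sum fun i _ => hp _ y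
      _ = P f := hP f

/-- `z ↦ dy_i · z`, as a continuous linear map. -/
def coordForm (i : Fin (q+1)) : ℂ →L[ℝ] (Vec (q+1) →L[ℝ] ℂ) :=
  ContinuousLinearMap.smulRightL ℝ (Vec (q+1)) ℂ (ContinuousLinearMap.proj i)

lemma pf_fderiv (f : SchwartzMap (Vec (q+1)) ℂ) : fderiv ℝ (partialFourierIntegral f)
    = fun y => ∑ i, (coordForm i ∘ partialFourierIntegral (pfDerivOp i f)) y :=
  funext fun y => (pf_hasFDerivAt f y).fderiv

lemma pf_contDiff_nat (n : ℕ) (f : SchwartzMap (Vec (q+1)) ℂ) :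
    ContDiff ℝ n (partialFourierIntegral f) := by
  induction n generalizing f with
  | zero =>
    exact contDiff_zero.2 (continuous_iff_continuousAt.2 fun y => (pf_hasFDerivAt f y).continuousAt)
  | succ n ih =>
    refine contDiff_succ_iff_hasFDerivAt.2
      ⟨fun y => ∑ i, coordForm i (partialFourierIntegral (pfDerivOp i f) y), ?_,
        fun y => pf_hasFDerivAt f y⟩
    exact ContDiff.sum fun i _ => (coordForm i).contDiff.comp (ih _)

lemma pf_contDiff (f : SchwartzMap (Vec (q+1)) ℂ) :
    ContDiff ℝ (⊤ : ℕ∞) (partialFourierIntegral f) :=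
  contDiff_infty.2 fun n => pf_contDiff_nat n f

/-- The Schwartz seminorms of `F₀f` are bounded by continuous seminorms of `f`. -/
lemma pf_iter_le (j n : ℕ) : ∃ p : Seminorm ℂ (SchwartzMap (Vec (q+1)) ℂ), Continuous p ∧
    ∀ (f : SchwartzMap (Vec (q+1)) ℂ) (y : Vec (q+1)),
      ‖y‖ ^ j * ‖iteratedFDeriv ℝ n (partialFourierIntegral f) y‖ ≤ p f := by
  induction n with
  | zero => simpa using pf_pow_le (q := q) j
  | succ n ih =>
    obtain ⟨p, hpc, hp⟩ := ih
    obtain ⟨P, hPc, hP⟩ := exists_seminorm_sum (Finset.univ : Finset (Fin (q+1)))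
      (fun i => ‖(coordForm i : ℂ →L[ℝ] (Vec (q+1) →L[ℝ] ℂ))‖₊ •
        p.comp (pfDerivOp i).toLinearMap)
      (fun i => continuous_const.mul (hpc.comp (pfDerivOp i).continuous))
    refine ⟨P, hPc, fun f y => ?_⟩
    have hc : ∀ i : Fin (q+1), ContDiff ℝ n (coordForm i ∘ partialFourierIntegral (pfDerivOp i f)) :=
      fun i => (coordForm i).contDiff.comp (pf_contDiff_nat n _)
    rw [← norm_iteratedFDeriv_fderiv, pf_fderiv, iteratedFDeriv_sum (fun i _ => hc i),
      Finset.sum_apply]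
    calc ‖y‖ ^ j * ‖∑ i, iteratedFDeriv ℝ n
          (coordForm i ∘ partialFourierIntegral (pfDerivOp i f)) y‖
        ≤ ‖y‖ ^ j * ∑ i, ‖(coordForm i : ℂ →L[ℝ] (Vec (q+1) →L[ℝ] ℂ))‖
            * ‖iteratedFDeriv ℝ n (partialFourierIntegral (pfDerivOp i f)) y‖ := by
          gcongr
          refine (norm_sum_le _ _).trans (Finset.sum_le_sum fun i _ => ?_)
          exact (coordForm i).norm_iteratedFDeriv_comp_left
            (pf_contDiff_nat n _).contDiffAt le_rfl
      _ ≤ ∑ i, ‖(coordForm i : ℂ →L[ℝ] (Vec (q+1) →L[ℝ] ℂ))‖ * p (pfDerivOp i f) := by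
          rw [Finset.mul_sum]
          refine Finset.sum_le_sum fun i _ => ?_
          rw [mul_left_comm]
          gcongr
          exact hp _ y
      _ = P f := hP f

/-- The partial Fourier transform in the time variable, as an operator on Schwartz space. -/
def pfCLM : SchwartzMap (Vec (q+1)) ℂ →L[ℂ] SchwartzMap (Vec (q+1)) ℂ :=
  SchwartzMap.mkCLM (σ := RingHom.id ℂ) (fun f => partialFourierIntegral f)
    (fun f g y => by
      rw [partialFourierIntegral, partialFourierIntegral, partialFourierIntegral,
        ← integral_add (integrable_phase_slice f y) (integrable_phase_slice g y)]
      simp [mul_add])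
    (fun a f y => by
      simp only [partialFourierIntegral, RingHom.id_apply, smul_eq_mul]
      rw [← integral_const_mul]
      congr 1
      funext t
      simp
      ring)
    pf_contDiff
    (fun n => by
      obtain ⟨p, hpc, hp⟩ := pf_iter_le (q := q) n.1 n.2
      obtain ⟨s, C, -, hC⟩ := Seminorm.bound_of_continuous
        (schwartz_withSeminorms ℂ (Vec (q+1)) ℂ) p hpc
      exact ⟨s, C, C.2, fun f y => (hp f y).trans (hC f)⟩)

lemma pfCLM_apply (f : SchwartzMap (Vec (q+1)) ℂ) (y : Vec (q+1)) :
    pfCLM f y = partialFourierIntegral f y := rfl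

/-- Reflection of the time variable. -/
def timeReflection : Vec (q+1) ≃L[ℝ] Vec (q+1) :=
  ContinuousLinearEquiv.piCongrRight fun i =>
    if i = 0 then ContinuousLinearEquiv.neg ℝ else ContinuousLinearEquiv.refl ℝ ℝ

lemma timeReflection_update (y : Vec (q+1)) (t : ℝ) :
    timeReflection (Function.update y 0 t) = Function.update y 0 (-t) := by
  funext i
  by_cases h : i = 0
  · subst h; simp [timeReflection]
  · simp [timeReflection, h]

/-- Up to the factor `2π` in the frequency, `F₀` is the Fourier transform of Mathlib applied to the
time slices. -/
lemma fourier_slice (φ : SchwartzMap (Vec (q+1)) ℂ) (x : Vec (q+1)) (w : ℝ) :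
    FourierTransform.fourier (fun t : ℝ => φ (Function.update x 0 t)) w
      = pfCLM φ (Function.update x 0 ((2 * Real.pi) * w)) := by
  rw [Real.fourier_eq', pfCLM_apply, partialFourierIntegral]
  congr 1
  funext t
  rw [Function.update_idem, Function.update_self, smul_eq_mul]
  congr 2
  simp
  ring

/-- The partial Fourier transform is surjective on Schwartz space (Fourier inversion in the time
variable). -/
lemma exists_pf_preimage (φ : SchwartzMap (Vec (q+1)) ℂ) :
    ∃ g : SchwartzMap (Vec (q+1)) ℂ, ∀ x, partialFourierIntegral g x = φ x := by
  refine ⟨((2 * Real.pi : ℝ)⁻¹ : ℂ) •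
    SchwartzMap.compCLMOfContinuousLinearEquiv ℂ timeReflection (pfCLM φ), fun x => ?_⟩
  have hpi : (0 : ℝ) < 2 * Real.pi := by positivity
  set h : ℝ → ℂ := fun t => φ (Function.update x 0 t) with hh
  have hF : FourierTransform.fourier h
      = fun w => pfCLM φ (Function.update x 0 ((2 * Real.pi) * w)) :=
    funext fun w => fourier_slice φ x w
  have hint : Integrable (FourierTransform.fourier h) := by
    rw [hF]
    exact (integrable_slice (pfCLM φ) x).comp_mul_left' hpi.ne'
  have hinv : FourierTransformInv.fourierInv (FourierTransform.fourier h) (x 0) = h (x 0) :=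
    congrFun (Continuous.fourierInv_fourier_eq (continuous_slice φ.continuous x)
      (integrable_slice φ x) hint) (x 0)
  have hx : φ x = h (x 0) := by simp [hh]
  rw [hx, ← hinv, Real.fourierInv_eq', partialFourierIntegral]
  let G : ℝ → ℂ := fun t => Complex.exp (-Complex.I * ((t * x 0 : ℝ) : ℂ))
    * pfCLM φ (Function.update x 0 (-t))
  have h1 : ∀ t : ℝ, Complex.exp (-Complex.I * ((t * x 0 : ℝ) : ℂ)) *
      (((2 * Real.pi : ℝ)⁻¹ : ℂ) • SchwartzMap.compCLMOfContinuousLinearEquiv ℂ timeReflection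
        (pfCLM φ)) (Function.update x 0 t) = ((2 * Real.pi : ℝ)⁻¹ : ℂ) * G t := by
    intro t
    simp only [G, _root_.smul_apply, smul_eq_mul,
      SchwartzMap.compCLMOfContinuousLinearEquiv_apply, Function.comp, timeReflection_update]
    ring
  have h2 : ∀ w : ℝ, Complex.exp (((2 * Real.pi * inner ℝ w (x 0) : ℝ) : ℂ) * Complex.I)
      • FourierTransform.fourier h w = G ((-(2 * Real.pi)) * w) := by
    intro w
    rw [hF]
    simp only [G, smul_eq_mul]
    congr 2
    · simp; ring
    · simp
  simp only [h1, h2]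
  rw [integral_const_mul, Measure.integral_comp_mul_left, abs_inv, abs_neg, abs_of_pos hpi]
  simp

end partialFourierSchwartz

/-! ### Localisation to the spectral support and truncation -/

section localization
variable {q : ℕ}

/-- A smooth partition of unity on a closed set subordinate to a finite open cover. -/
lemma exists_partition {T : Type} [Fintype T] {K : Set (Vec q)} (hK : IsClosed K)
    (U : T → Set (Vec q)) (hU : ∀ i, IsOpen (U i)) (hKU : K ⊆ ⋃ i, U i) :
    ∃ ρ : T → Vec q → ℝ, (∀ i, ContDiff ℝ (⊤ : ℕ∞) (ρ i)) ∧ (∀ i, tsupport (ρ i) ⊆ U i) ∧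
      ∀ y ∈ K, ∑ i, ρ i y = 1 := by
  obtain ⟨ρ, hρ⟩ := SmoothPartitionOfUnity.exists_isSubordinate
    (modelWithCornersSelf ℝ (Vec q)) hK U hU hKU
  refine ⟨fun i => ρ i, fun i => (ρ i).contMDiff.contDiff, hρ, fun y hy => ?_⟩
  rw [← finsum_eq_sum_of_fintype]
  exact ρ.sum_eq_one hy

/-- Local vanishing implies global vanishing: `F₀u` annihilates every test function whose support
avoids `supp F₀u`. -/
lemma pf_eq_zero_of_disjoint (u : TD (q+1)) {A : Vec (q+1) → ℂ} (hA : IsTest A)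
    (hsupp : ∀ y ∈ tsupport A, y ∉ pfSupport u) : u (pfCLM hA.toS) = 0 := by
  have hex : ∀ y : tsupport A, ∃ U : Set (Vec (q+1)), IsOpen U ∧ (y : Vec (q+1)) ∈ U ∧
      PFVanishesOn u U := fun y => not_not.1 (hsupp y y.2)
  choose U hUo hUm hU using hex
  obtain ⟨T, hT⟩ := hA.supp.isCompact.elim_finite_subcover U hUo
    (fun y hy => Set.mem_iUnion.2 ⟨⟨y, hy⟩, hUm ⟨y, hy⟩⟩)
  obtain ⟨ρ, hs', hρ, hone⟩ := exists_partition (isClosed_tsupport A) (fun i : T => U i)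
    (fun i => hUo i) (fun y hy => by
      obtain ⟨i, hi, hyi⟩ := Set.mem_iUnion₂.1 (hT hy)
      exact Set.mem_iUnion.2 ⟨⟨i, hi⟩, hyi⟩)
  have hs : ∀ i : T, ContDiff ℝ (⊤ : ℕ∞) fun y => ((ρ i y : ℝ) : ℂ) := fun i =>
    Complex.ofRealCLM.contDiff.comp (hs' i)
  have ht : ∀ i : T, IsTest fun y => ((ρ i y : ℝ) : ℂ) * A y := fun i => hA.smooth_mul (hs i)
  have hsum : hA.toS = ∑ i : T, (ht i).toS := by
    ext y
    rw [_root_.sum_apply]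
    simp only [IsTest.toS_apply]
    rw [← Finset.sum_mul]
    by_cases hy : y ∈ tsupport A
    · rw [← Complex.ofReal_sum, hone y hy]
      simp
    · simp [image_eq_zero_of_notMem_tsupport hy]
  rw [hsum, map_sum, map_sum]
  have hsub : ∀ i : T, tsupport ⇑(ht i).toS ⊆ U i := fun i => by
    refine subset_trans (closure_mono fun y hy => ?_) (hρ i)
    simp only [IsTest.coe_toS, Function.mem_support, ne_eq, mul_eq_zero, not_or,
      Complex.ofReal_eq_zero] at hy
    exact hy.1
  have hzero : ∀ i : T, u (pfCLM (ht i).toS) = 0 := fun i =>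
    hU i (ht i).toS (pfCLM (ht i).toS) (by rw [IsTest.coe_toS]; exact (ht i).supp) (hsub i)
      (fun y => pfCLM_apply (ht i).toS y)
  exact Finset.sum_eq_zero fun i _ => hzero i

end localization

section shift
variable {n : ℕ}

/-- Translating by `a` and modulating by `k` costs polynomial factors in `a` and `k`. -/
lemma shift_bound (J N : ℕ) : ∃ C : ℝ, 0 ≤ C ∧ ∀ f : Vec n → ℂ, ContDiff ℝ (⊤ : ℕ∞) f →
    ∀ B : ℝ, (∀ l ≤ N, ∀ z, (1 + ‖z‖) ^ J * ‖iteratedFDeriv ℝ l f z‖ ≤ B) →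
    ∀ a k : Vec n, ∀ j ≤ J, ∀ i ≤ N, ∀ y,
      ‖y‖ ^ j * ‖iteratedFDeriv ℝ i (fun y => f (y - a) * planeWave k y) y‖
        ≤ C * (1 + ‖k‖) ^ N * (1 + ‖a‖) ^ J * B := by
  obtain ⟨C, hC, h⟩ := norm_iteratedFDeriv_mul_planeWave (n := n) N
  refine ⟨C * (N + 1), by positivity, fun f hf B hB a k j hj i hi y => ?_⟩
  have hfa : ContDiff ℝ (⊤ : ℕ∞) fun y => f (y - a) := hf.comp (contDiff_id.sub contDiff_const)
  have h1 := h k _ hfa i hi y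
  have hy : ‖y‖ ^ j ≤ (1 + ‖y - a‖) ^ J * (1 + ‖a‖) ^ J := by
    have h0 : ‖y‖ ≤ ‖y - a‖ + ‖a‖ := by simpa using norm_add_le (y - a) a
    have p1 := norm_nonneg (y - a)
    have p2 := norm_nonneg a
    rw [← mul_pow]
    calc ‖y‖ ^ j ≤ ((1 + ‖y - a‖) * (1 + ‖a‖)) ^ j := by
          gcongr
          nlinarith [mul_nonneg p1 p2]
      _ ≤ _ := pow_le_pow_right₀ (by nlinarith [mul_nonneg p1 p2]) hj
  have hs : (1 + ‖y - a‖) ^ J * ∑ l ∈ Finset.range (N + 1),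
      ‖iteratedFDeriv ℝ l (fun y => f (y - a)) y‖ ≤ (N + 1) * B := by
    rw [Finset.mul_sum]
    refine (Finset.sum_le_card_nsmul _ _ B fun l hl => ?_).trans (le_of_eq (by simp))
    rw [iteratedFDeriv_comp_sub]
    exact hB l (Nat.lt_succ_iff.1 (Finset.mem_range.1 hl)) _
  calc ‖y‖ ^ j * ‖iteratedFDeriv ℝ i (fun y => f (y - a) * planeWave k y) y‖
      ≤ ((1 + ‖y - a‖) ^ J * (1 + ‖a‖) ^ J) * (C * (1 + ‖k‖) ^ N *
          ∑ l ∈ Finset.range (N + 1), ‖iteratedFDeriv ℝ l (fun y => f (y - a)) y‖) := by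
        gcongr
    _ = C * (1 + ‖k‖) ^ N * (1 + ‖a‖) ^ J * ((1 + ‖y - a‖) ^ J *
          ∑ l ∈ Finset.range (N + 1), ‖iteratedFDeriv ℝ l (fun y => f (y - a)) y‖) := by ring
    _ ≤ C * (1 + ‖k‖) ^ N * (1 + ‖a‖) ^ J * ((N + 1) * B) := by gcongr
    _ = _ := by ring

lemma schwartz_bound (g : SchwartzMap (Vec n) ℂ) (J N : ℕ) : ∃ B : ℝ, 0 ≤ B ∧
    ∀ l ≤ N, ∀ z, (1 + ‖z‖) ^ J * ‖iteratedFDeriv ℝ l g z‖ ≤ B :=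
  ⟨2 ^ J * ((Finset.Iic ((J, N) : ℕ × ℕ)).sup
      fun m => SchwartzMap.seminorm ℂ (E := Vec n) (F := ℂ) m.1 m.2) g,
    mul_nonneg (by positivity) (apply_nonneg _ _),
    fun _ hl z => SchwartzMap.one_add_le_sup_seminorm_apply (m := (J, N)) le_rfl hl g z⟩

/-- The Schwartz function `y ↦ g(y - a) e^{-i⟨y,k⟩}`. -/
def shiftWave (g : SchwartzMap (Vec n) ℂ) (a k : Vec n) : SchwartzMap (Vec n) ℂ where
  toFun y := g (y - a) * planeWave k y
  smooth' := (g.smooth'.comp (contDiff_id.sub contDiff_const)).mul (planeWave_smooth k)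
  decay' j i := by
    obtain ⟨C, -, hC⟩ := shift_bound (n := n) j i
    obtain ⟨B, -, hB⟩ := schwartz_bound g j i
    exact ⟨_, hC g g.smooth' B hB a k j le_rfl i le_rfl⟩

lemma shiftWave_apply (g : SchwartzMap (Vec n) ℂ) (a k y : Vec n) :
    shiftWave g a k y = g (y - a) * planeWave k y := rfl

/-- A Schwartz function can be truncated at radius `R`, with an error that is
`O(R^{-M})` in any given Schwartz seminorm. -/
lemma exists_truncation (g : SchwartzMap (Vec n) ℂ) (J N M : ℕ) : ∃ C : ℝ, 0 ≤ C ∧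
    ∀ R : ℝ, 1 ≤ R → ∃ cut : Vec n → ℂ, IsTest cut ∧
      tsupport cut ⊆ Metric.closedBall 0 (2 * R) ∧
      ∀ l ≤ N, ∀ z, (1 + ‖z‖) ^ J * ‖iteratedFDeriv ℝ l (fun z => g z - cut z) z‖
        ≤ C * ((1 + R) ^ M)⁻¹ := by
  let b : ContDiffBump (0 : Vec n) := ⟨1, 2, one_pos, one_lt_two⟩
  let bc : Vec n → ℂ := fun z => ((b z : ℝ) : ℂ)
  have hbs : ContDiff ℝ (⊤ : ℕ∞) bc := Complex.ofRealCLM.contDiff.comp b.contDiff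
  have hb : IsTest bc := ⟨hbs, b.hasCompactSupport.comp_left Complex.ofReal_zero⟩
  obtain ⟨Bb, hBb, hbb⟩ := isTest_pow_bound hb 0 N
  obtain ⟨Bg, hBg, hg⟩ := schwartz_bound g (J + M) N
  refine ⟨Bg + (N + 1) * (2 ^ N * Bb * Bg), by positivity, fun R hR => ?_⟩
  have hR0 : 0 < R := by linarith
  let L : Vec n →L[ℝ] Vec n := R⁻¹ • ContinuousLinearMap.id ℝ (Vec n)
  have hL : ‖L‖ ≤ 1 := by
    refine (norm_smul_le R⁻¹ (ContinuousLinearMap.id ℝ (Vec n))).trans ?_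
    rw [Real.norm_of_nonneg (by positivity)]
    exact mul_le_one₀ (inv_le_one_of_one_le₀ hR) (norm_nonneg _) ContinuousLinearMap.norm_id_le
  have hcs : ContDiff ℝ (⊤ : ℕ∞) (bc ∘ L) := hbs.comp L.contDiff
  have hnear : ∀ z : Vec n, ‖z‖ < R → bc (L z) = 1 := fun z hz => by
    have : b (L z) = 1 := b.one_of_mem_closedBall (by
      simp only [L, b, _root_.smul_apply, ContinuousLinearMap.id_apply, mem_closedBall_zero_iff,
        norm_smul, norm_inv, Real.norm_of_nonneg hR0.le]
      rw [inv_mul_le_one₀ hR0]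
      exact hz.le)
    simp [bc, this]
  have hfar : tsupport (fun z => bc (L z) * g z) ⊆ Metric.closedBall 0 (2 * R) := by
    refine closure_minimal (fun z hz => ?_) Metric.isClosed_closedBall
    by_contra hz2
    rw [mem_closedBall_zero_iff, not_le] at hz2
    have : b (L z) = 0 := b.zero_of_le_dist (by
      simp only [L, b, _root_.smul_apply, ContinuousLinearMap.id_apply, dist_zero_right,
        norm_smul, norm_inv, Real.norm_of_nonneg hR0.le]
      rw [← div_eq_inv_mul, le_div_iff₀ hR0]
      exact hz2.le)
    simp [bc, this] at hz
  refine ⟨fun z => bc (L z) * g z, ⟨hcs.mul g.smooth', ?_⟩, hfar, fun l hl z => ?_⟩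
  · exact HasCompactSupport.of_support_subset_isCompact (isCompact_closedBall 0 (2 * R))
      ((subset_tsupport _).trans hfar)
  rcases lt_or_ge ‖z‖ R with hz | hz
  · -- the truncation changes nothing inside the ball of radius `R`
    have hev : (fun z => g z - bc (L z) * g z) =ᶠ[nhds z] fun _ => (0 : ℂ) := by
      filter_upwards [(isOpen_lt continuous_norm continuous_const).mem_nhds hz] with w hw
      rw [hnear w hw]
      ring
    rw [(Filter.EventuallyEq.iteratedFDeriv ℝ hev l).eq_of_nhds]
    simp only [iteratedFDeriv_fun_zero, Pi.zero_apply, norm_zero, mul_zero]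
    positivity
  · have hg1 : ∀ i ≤ N, (1 + ‖z‖) ^ J * ‖iteratedFDeriv ℝ i g z‖ ≤ Bg * ((1 + R) ^ M)⁻¹ := by
      intro i hi
      rw [← div_eq_mul_inv, le_div_iff₀ (by positivity)]
      refine le_trans ?_ (hg i hi z)
      rw [pow_add, mul_right_comm]
      gcongr
    have hb1 : ∀ i ≤ N, ‖iteratedFDeriv ℝ i (bc ∘ L) z‖ ≤ Bb := by
      intro i hi
      refine (norm_iteratedFDeriv_comp_clm L hbs i z).trans ?_
      refine (mul_le_of_le_one_right (norm_nonneg _) (pow_le_one₀ (norm_nonneg _) hL)).trans ?_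
      refine le_trans ?_ (by simpa using hbb 0 le_rfl (L z))
      exact Finset.single_le_sum (f := fun i => ‖iteratedFDeriv ℝ i bc (L z)‖)
        (fun i _ => norm_nonneg _) (Finset.mem_range.2 (by omega))
    have hprod : (1 + ‖z‖) ^ J * ‖iteratedFDeriv ℝ l (fun z => bc (L z) * g z) z‖
        ≤ (N + 1) * (2 ^ N * Bb * (Bg * ((1 + R) ^ M)⁻¹)) := by
      have h0 := norm_iteratedFDeriv_mul_le (n := l) hcs g.smooth' z (by exact_mod_cast le_top)
      refine (mul_le_mul_of_nonneg_left h0 (by positivity)).trans ?_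
      rw [Finset.mul_sum]
      refine (Finset.sum_le_card_nsmul _ _ (2 ^ N * Bb * (Bg * ((1 + R) ^ M)⁻¹))
        fun i hi => ?_).trans ?_
      · have hil : i ≤ l := Nat.lt_succ_iff.1 (Finset.mem_range.1 hi)
        have h1 : (l.choose i : ℝ) ≤ 2 ^ N := by
          calc (l.choose i : ℝ) ≤ 2 ^ l := by exact_mod_cast Nat.choose_le_two_pow l i
            _ ≤ 2 ^ N := pow_le_pow_right₀ (by norm_num) hl
        calc (1 + ‖z‖) ^ J * (l.choose i * ‖iteratedFDeriv ℝ i (bc ∘ L) z‖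
              * ‖iteratedFDeriv ℝ (l - i) g z‖)
            = l.choose i * ‖iteratedFDeriv ℝ i (bc ∘ L) z‖
              * ((1 + ‖z‖) ^ J * ‖iteratedFDeriv ℝ (l - i) g z‖) := by ring
          _ ≤ 2 ^ N * Bb * (Bg * ((1 + R) ^ M)⁻¹) := by
            have e1 := hb1 i (hil.trans hl)
            have e2 := hg1 (l - i) (by omega)
            exact mul_le_mul (mul_le_mul h1 e1 (norm_nonneg _) (by positivity)) e2
              (by positivity) (by positivity)
      · rw [nsmul_eq_mul, Finset.card_range]
        push_cast
        gcongr
    have hsub : iteratedFDeriv ℝ l (fun z => g z - bc (L z) * g z) z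
        = iteratedFDeriv ℝ l g z - iteratedFDeriv ℝ l (fun z => bc (L z) * g z) z :=
      iteratedFDeriv_sub_apply (g.smooth l).contDiffAt
        (((hcs.mul g.smooth').of_le (by exact_mod_cast le_top)).contDiffAt)
    rw [hsub]
    calc (1 + ‖z‖) ^ J * ‖iteratedFDeriv ℝ l g z
          - iteratedFDeriv ℝ l (fun z => bc (L z) * g z) z‖
        ≤ (1 + ‖z‖) ^ J * (‖iteratedFDeriv ℝ l g z‖
          + ‖iteratedFDeriv ℝ l (fun z => bc (L z) * g z) z‖) := by
          gcongr
          exact norm_sub_le _ _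
      _ ≤ Bg * ((1 + R) ^ M)⁻¹ + (N + 1) * (2 ^ N * Bb * (Bg * ((1 + R) ^ M)⁻¹)) := by
          rw [mul_add]
          exact add_le_add (hg1 l hl) hprod
      _ = _ := by ring

end shift

/-! ### Decay away from the spectral support -/

section spectral
variable {q : ℕ}

/-- Modulating by `e^{-i⟨·,k⟩}` corresponds under `F₀` to a translation by `k₀` in the frequency
variable and a modulation in the remaining variables. -/
lemma pf_shiftWave {φ : Vec (q+1) → ℂ} (g : SchwartzMap (Vec (q+1)) ℂ)
    (hg : ∀ x, partialFourierIntegral g x = φ x) (k x : Vec (q+1)) :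
    pfCLM (shiftWave g (Pi.single 0 (k 0)) (Function.update k 0 0)) x = φ x * planeWave k x := by
  rw [← hg, pfCLM_apply, partialFourierIntegral, partialFourierIntegral]
  let G : ℝ → ℂ := fun t => Complex.exp (-Complex.I * ((t * x 0 : ℝ) : ℂ))
    * g (Function.update x 0 t)
  have h1 : ∀ t : ℝ, Complex.exp (-Complex.I * ((t * x 0 : ℝ) : ℂ)) *
      shiftWave g (Pi.single 0 (k 0)) (Function.update k 0 0) (Function.update x 0 t)
      = planeWave k x * G (t - k 0) := by
    intro t
    have hu : Function.update x 0 t - Pi.single 0 (k 0) = Function.update x 0 (t - k 0) := by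
      funext i
      by_cases h : i = 0
      · subst h; simp
      · simp [h]
    rw [shiftWave_apply, hu]
    simp only [G, planeWave]
    have he : Complex.exp (-Complex.I * ((t * x 0 : ℝ) : ℂ)) *
        Complex.exp (-Complex.I * ((∑ i, Function.update x 0 t i * Function.update k 0 0 i : ℝ) : ℂ))
        = Complex.exp (-Complex.I * ((∑ i, x i * k i : ℝ) : ℂ)) *
          Complex.exp (-Complex.I * (((t - k 0) * x 0 : ℝ) : ℂ)) := by
      rw [← Complex.exp_add, ← Complex.exp_add, Fin.sum_univ_succ, Fin.sum_univ_succ]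
      congr 1
      simp
      ring
    linear_combination g (Function.update x 0 (t - k 0)) * he
  simp only [h1]
  rw [integral_const_mul, integral_sub_right_eq_self G, mul_comm]

/-- If `supp F₀u` lies in the half space `σ ω ≥ α`, the localised Fourier transforms of `u` decay
rapidly in every cone `σ k₀ ≤ -c‖k‖`. -/
lemma spectral_decay (u : TD (q+1)) (σ α : ℝ) (hσ : |σ| = 1)
    (hu : pfSupport u ⊆ {y | α ≤ σ * y 0}) {φ : Vec (q+1) → ℂ} (hφ : IsTest φ)
    (c : ℝ) (hc : 0 < c) (N : ℕ) :
    ∃ C : ℝ, ∀ k : Vec (q+1), σ * k 0 ≤ -(c * ‖k‖) →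
      ‖ev u (fun x => φ x * planeWave k x)‖ * (1 + ‖k‖) ^ N ≤ C := by
  obtain ⟨g, hg⟩ := exists_pf_preimage hφ.toS
  let v : TD (q+1) := u.comp pfCLM
  obtain ⟨J, N', Cv, hCv, hv⟩ := td_bound v
  obtain ⟨Cs, hCs, hs⟩ := shift_bound (n := q+1) J N'
  obtain ⟨Ct, hCt, ht⟩ := exists_truncation g J N' (N' + J + N)
  obtain ⟨M, hM⟩ := ev_wave_growth u
  obtain ⟨Cg, hCg, hgr⟩ := hM φ hφ
  set K0 : ℝ := 4 / c + 2 * |α| / c + 1 with hK0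
  have hK0p : 0 ≤ K0 := by positivity
  set c' : ℝ := min 1 (c / 4) with hc'
  have hc'0 : 0 < c' := lt_min one_pos (by positivity)
  refine ⟨max (Cg * (1 + K0) ^ M * (1 + K0) ^ N)
    (Cv * (Cs * Ct) * (c' ^ (N' + J + N))⁻¹), fun k hk => ?_⟩
  rcases lt_or_ge ‖k‖ K0 with hsmall | hlarge
  · refine le_trans ?_ (le_max_left _ _)
    have := hgr k
    calc _ ≤ (Cg * (1 + ‖k‖) ^ M) * (1 + ‖k‖) ^ N := by gcongr
      _ ≤ _ := by gcongr
  refine le_trans ?_ (le_max_right _ _)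
  have hck : 4 + 2 * |α| + c ≤ c * ‖k‖ := by
    calc 4 + 2 * |α| + c = c * K0 := by rw [hK0]; field_simp
      _ ≤ c * ‖k‖ := by gcongr
  set R : ℝ := c * ‖k‖ / 4 with hR
  have hR1 : 1 ≤ R := by
    rw [hR]
    linarith [abs_nonneg α]
  obtain ⟨cut, hcut, hcs, hct⟩ := ht R hR1
  set a : Vec (q+1) := Pi.single 0 (k 0) with ha
  set k' : Vec (q+1) := Function.update k 0 0 with hk'
  have hnk' : ‖k'‖ ≤ ‖k‖ := by
    refine (pi_norm_le_iff_of_nonneg (norm_nonneg k)).2 fun i => ?_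
    by_cases h : i = 0
    · subst h; simp [hk']
    · simpa [hk', h] using norm_le_pi_norm k i
  have hna : ‖a‖ ≤ ‖k‖ := by
    rw [ha, Pi.norm_single]
    exact norm_le_pi_norm k 0
  -- the truncated part has Fourier support disjoint from the spectrum
  have hAtest : IsTest ⇑(shiftWave hcut.toS a k') := by
    refine ⟨(shiftWave hcut.toS a k').smooth', ?_⟩
    have h0 : HasCompactSupport fun y : Vec (q+1) => cut (y - a) :=
      hcut.supp.comp_homeomorph (Homeomorph.subRight a)
    exact h0.mul_right
  have hAsupp : ∀ y ∈ tsupport ⇑(shiftWave hcut.toS a k'), y ∉ pfSupport u := by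
    intro y hy hyu
    have h1 : tsupport ⇑(shiftWave hcut.toS a k') ⊆ Metric.closedBall a (2 * R) := by
      refine closure_minimal (fun z hz => ?_) Metric.isClosed_closedBall
      have hz1 : cut (z - a) ≠ 0 := left_ne_zero_of_mul hz
      have := hcs (subset_tsupport _ hz1)
      rwa [mem_closedBall_zero_iff, ← dist_eq_norm] at this
    have h2 : ‖y - a‖ ≤ 2 * R := by
      rw [← dist_eq_norm]
      exact h1 hy
    have h3 : |y 0 - k 0| ≤ 2 * R := by
      have := (norm_le_pi_norm (y - a) 0).trans h2
      simpa [ha] using this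
    have h4 : σ * (y 0 - k 0) ≤ 2 * R := by
      refine (le_abs_self _).trans ?_
      rwa [abs_mul, hσ, one_mul]
    have h5 : α ≤ σ * y 0 := hu hyu
    have h6 := neg_abs_le α
    rw [hR] at h4
    nlinarith
  have hA : v (shiftWave hcut.toS a k') = 0 := by
    have h0 := pf_eq_zero_of_disjoint u hAtest hAsupp
    have h1 : hAtest.toS = shiftWave hcut.toS a k' := by
      ext y
      rfl
    rwa [h1] at h0
  have hB : ‖v (shiftWave (g - hcut.toS) a k')‖
      ≤ Cv * (Cs * (1 + ‖k'‖) ^ N' * (1 + ‖a‖) ^ J * (Ct * ((1 + R) ^ (N' + J + N))⁻¹)) := by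
    refine hv _ _ (by positivity) fun j hj i hi x => ?_
    exact hs (fun z => g z - cut z) (g.smooth'.sub hcut.smooth) _ hct a k' j hj i hi x
  have hsum : shiftWave g a k' = shiftWave hcut.toS a k' + shiftWave (g - hcut.toS) a k' := by
    ext y
    rw [_root_.add_apply, shiftWave_apply, shiftWave_apply, shiftWave_apply, _root_.sub_apply]
    ring
  have hev : ev u (fun x => φ x * planeWave k x) = v (shiftWave (g - hcut.toS) a k') := by
    have h0 : ev u (fun x => φ x * planeWave k x) = u (pfCLM (shiftWave g a k')) :=
      ev_eq u _ (pf_shiftWave (φ := φ) g hg k) (isTest_wave hφ k)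
    rw [h0]
    change v (shiftWave g a k') = _
    rw [hsum, map_add, hA, zero_add]
  have hR2 : c' * (1 + ‖k‖) ≤ 1 + R := by
    have e1 : c' ≤ 1 := min_le_left _ _
    have e2 : c' * ‖k‖ ≤ c / 4 * ‖k‖ := by
      gcongr
      exact min_le_right _ _
    rw [hR]
    linarith
  rw [hev]
  calc ‖v (shiftWave (g - hcut.toS) a k')‖ * (1 + ‖k‖) ^ N
      ≤ Cv * (Cs * (1 + ‖k‖) ^ N' * (1 + ‖k‖) ^ J *
          (Ct * ((c' * (1 + ‖k‖)) ^ (N' + J + N))⁻¹)) * (1 + ‖k‖) ^ N := by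
        gcongr
        refine hB.trans ?_
        gcongr
    _ = Cv * (Cs * Ct) * (c' ^ (N' + J + N))⁻¹ := by
        have : (0 : ℝ) < 1 + ‖k‖ := by positivity
        rw [mul_pow, pow_add (1 + ‖k‖), pow_add (1 + ‖k‖)]
        field_simp

end spectral

/-! ### Regular directions and wave front sets -/

section wavefront
variable {p : ℕ}

/-- `u` is regular in the direction `k₀` uniformly over space: in one conic neighbourhood of `k₀`
the Fourier transforms of all localisations `φu` decay rapidly. -/
def StrongReg (u : TD p) (k₀ : Vec p) : Prop :=
  ∃ Γ : Set (Vec p), IsConicNbhd Γ k₀ ∧ ∀ φ : Vec p → ℂ, IsTest φ → ∀ N : ℕ,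
    ∃ C : ℝ, ∀ k ∈ Γ, ‖ev u (fun x => φ x * planeWave k x)‖ * (1 + ‖k‖) ^ N ≤ C

lemma decay_iff (a C r : ℝ) (N : ℕ) (hr : 0 ≤ r) :
    a * (1 + r) ^ N ≤ C ↔ a ≤ C * (1 + r) ^ (-(N : ℤ)) := by
  have : (0 : ℝ) < (1 + r) ^ N := by positivity
  rw [zpow_neg, zpow_natCast, ← div_eq_mul_inv, le_div_iff₀ this]

lemma exists_test_ne_zero (x : Vec p) : ∃ φ : Vec p → ℂ, IsTest φ ∧ φ x ≠ 0 := by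
  let b : ContDiffBump x := ⟨1, 2, one_pos, one_lt_two⟩
  refine ⟨fun z => ((b z : ℝ) : ℂ), ⟨Complex.ofRealCLM.contDiff.comp b.contDiff,
    b.hasCompactSupport.comp_left Complex.ofReal_zero⟩, ?_⟩
  have : b x = 1 := b.one_of_mem_closedBall (by simp [b])
  simp [this]

lemma StrongReg.regular {u : TD p} {k₀ : Vec p} (h : StrongReg u k₀) (x : Vec p) :
    IsRegularDirectedPoint u x k₀ := by
  obtain ⟨Γ, hΓ, hdec⟩ := h
  obtain ⟨φ, hφ, hx⟩ := exists_test_ne_zero x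
  refine ⟨hφ.toS, hφ.supp, hx, Γ, hΓ, fun n => ?_⟩
  obtain ⟨C, hC⟩ := hdec φ hφ n
  refine ⟨C, fun k hk ψ hψ => ?_⟩
  rw [← decay_iff _ _ _ _ (norm_nonneg k), show u ψ = ev u fun x => φ x * planeWave k x from
    (ev_eq u ψ hψ (isTest_wave hφ k)).symm]
  exact hC k hk

/-- Adding a distribution that is strongly regular in the direction `k₀` and a smooth function
does not destroy regularity at `(x, k₀)`. -/
lemma regular_of_le {u v w : TD p} {g : Vec p → ℂ} (hg : ContDiff ℝ (⊤ : ℕ∞) g)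
    (huvw : ∀ χ : SchwartzMap (Vec p) ℂ, HasCompactSupport ⇑χ →
      ‖u χ‖ ≤ ‖v χ‖ + ‖w χ‖ + ‖∫ x, g x * χ x‖)
    {x k₀ : Vec p} (hv : IsRegularDirectedPoint v x k₀) (hw : StrongReg w k₀) :
    IsRegularDirectedPoint u x k₀ := by
  obtain ⟨φ, hφs, hx, Γ₁, ⟨hΓo, hΓk, hΓc⟩, h1⟩ := hv
  obtain ⟨Γ₂, ⟨hΓo', hΓk', hΓc'⟩, h2⟩ := hw
  have hφ := isTest_of_schwartz φ hφs
  refine ⟨φ, hφs, hx, Γ₁ ∩ Γ₂, ⟨hΓo.inter hΓo', ⟨hΓk, hΓk'⟩, fun k hk t ht =>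
    ⟨hΓc k hk.1 t ht, hΓc' k hk.2 t ht⟩⟩, fun n => ?_⟩
  obtain ⟨C1, hC1⟩ := h1 n
  obtain ⟨C2, hC2⟩ := h2 φ hφ n
  obtain ⟨C3, hC3⟩ := integral_wave_decay n (IsTest.smooth_mul hg hφ)
  refine ⟨C1 + C2 + C3, fun k hk ψ hψ => ?_⟩
  have hψc : HasCompactSupport ⇑ψ := by
    rw [show ⇑ψ = fun x => φ x * planeWave k x from funext hψ]
    exact (isTest_wave hφ k).supp
  have e1 := hC1 k hk.1 ψ hψ
  have e2 := hC2 k hk.2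
  have e3 := hC3 k
  have ew : ev w (fun x => φ x * planeWave k x) = w ψ := ev_eq w ψ hψ (isTest_wave hφ k)
  rw [ew, decay_iff _ _ _ _ (norm_nonneg k)] at e2
  rw [decay_iff _ _ _ _ (norm_nonneg k)] at e3
  have e4 : ∫ x, g x * ψ x = ∫ x, g x * φ x * planeWave k x := by
    congr 1
    funext x
    rw [hψ x, mul_assoc]
    rfl
  have e5 := huvw ψ hψc
  rw [e4] at e5
  rw [add_mul, add_mul]
  linarith

end wavefront

section cones
variable {p d m : ℕ}

/-- Directions where the symbol of the lifted normally hyperbolic operator does not vanish lie in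
an open cone on which that symbol is elliptic. -/
lemma elliptic_cone (em : Fin (d+1) → Fin p) {k₀ : Vec p}
    (h : k₀ (em 0) ^ 2 - ∑ i : Fin d, k₀ (em i.succ) ^ 2 ≠ 0) :
    ∃ c : ℝ, 0 < c ∧ ∃ Γ : Set (Vec p), IsConicNbhd Γ k₀ ∧
      ∀ k ∈ Γ, c * ‖k‖ ^ 2 ≤ |k (em 0) ^ 2 - ∑ i : Fin d, k (em i.succ) ^ 2| := by
  have hk : k₀ ≠ 0 := by
    rintro rfl
    simp at h
  have hn : 0 < ‖k₀‖ := norm_pos_iff.2 hk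
  have ha := abs_pos.2 h
  set a := |k₀ (em 0) ^ 2 - ∑ i : Fin d, k₀ (em i.succ) ^ 2| with ha'
  refine ⟨a / (2 * ‖k₀‖ ^ 2), by positivity,
    {k | a / (2 * ‖k₀‖ ^ 2) * ‖k‖ ^ 2 < |k (em 0) ^ 2 - ∑ i : Fin d, k (em i.succ) ^ 2|},
    ⟨isOpen_lt (by fun_prop) (by fun_prop), ?_, fun k hk t ht => ?_⟩, fun k hk => le_of_lt hk⟩
  · rw [Set.mem_ofPred_eq, ← ha']
    have : a / (2 * ‖k₀‖ ^ 2) * ‖k₀‖ ^ 2 = a / 2 := by field_simp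
    linarith
  · rw [Set.mem_ofPred_eq] at hk ⊢
    have h1 : (t • k) (em 0) ^ 2 - ∑ i : Fin d, (t • k) (em i.succ) ^ 2
        = t ^ 2 * (k (em 0) ^ 2 - ∑ i : Fin d, k (em i.succ) ^ 2) := by
      simp only [Pi.smul_apply, smul_eq_mul, mul_pow, mul_sub, Finset.mul_sum]
    have h2 : (0 : ℝ) < t ^ 2 := by positivity
    rw [h1, abs_mul, abs_of_pos h2, norm_smul, mul_pow, Real.norm_of_nonneg ht.le]
    calc _ = t ^ 2 * (a / (2 * ‖k₀‖ ^ 2) * ‖k‖ ^ 2) := by ring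
      _ < _ := by gcongr

/-- A one-sided bound on the support of `F₀u` makes `u` regular in the opposite time-frequency
half space. -/
lemma spectral_strongReg {q : ℕ} (u : TD (q+1)) (σ α : ℝ) (hσ : |σ| = 1)
    (hu : pfSupport u ⊆ {y | α ≤ σ * y 0}) {k₀ : Vec (q+1)} (hk : σ * k₀ 0 < 0) :
    StrongReg u k₀ := by
  have hk0 : k₀ ≠ 0 := by
    rintro rfl
    simp at hk
  have hn : 0 < ‖k₀‖ := norm_pos_iff.2 hk0
  set c : ℝ := -(σ * k₀ 0) / (2 * ‖k₀‖) with hc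
  have hc0 : 0 < c := div_pos (by linarith) (by positivity)
  refine ⟨{k | σ * k 0 < -(c * ‖k‖)}, ⟨isOpen_lt (by fun_prop) (by fun_prop), ?_,
    fun k hk t ht => ?_⟩, fun φ hφ N => ?_⟩
  · have : c * ‖k₀‖ = -(σ * k₀ 0) / 2 := by
      rw [hc]
      field_simp
    rw [Set.mem_ofPred_eq, this]
    linarith
  · rw [Set.mem_ofPred_eq] at hk ⊢
    rw [norm_smul, Real.norm_of_nonneg ht.le, Pi.smul_apply, smul_eq_mul]
    nlinarith
  · obtain ⟨C, hC⟩ := spectral_decay u σ α hσ hu hφ c hc0 N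
    exact ⟨C, fun k hk => hC k (le_of_lt hk)⟩

end cones

section biparametrix
variable {d m : ℕ}

/-- A nonzero covector without time component does not vanish on both groups `x` and `x'` of spatial
variables. -/
lemma exists_emb_ne_zero {k₀ : Vec (2*d+1)} (hk : k₀ ≠ 0) (h0 : k₀ 0 = 0) :
    (∃ i : Fin d, k₀ (emb1 d i.succ) ≠ 0) ∨ ∃ i : Fin d, k₀ (emb2 d i.succ) ≠ 0 := by
  obtain ⟨i, hi⟩ := Function.ne_iff.1 hk
  have hi0 : i.1 ≠ 0 := fun h => hi (by rw [show i = 0 from Fin.ext h]; exact h0)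
  have hlt := i.isLt
  rcases le_or_gt i.1 d with h | h
  · refine Or.inl ⟨⟨i.1 - 1, by omega⟩, ?_⟩
    rwa [show emb1 d (Fin.succ ⟨i.1 - 1, by omega⟩) = i from Fin.ext (by simp [emb1]; omega)]
  · refine Or.inr ⟨⟨i.1 - 1 - d, by omega⟩, ?_⟩
    rwa [show emb2 d (Fin.succ ⟨i.1 - 1 - d, by omega⟩) = i from Fin.ext (by simp [emb2]; omega)]

lemma symbol_ne_zero (em : Fin (d+1) → Fin (2*d+1)) {k₀ : Vec (2*d+1)} (h0 : k₀ (em 0) = 0)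
    (h : ∃ i : Fin d, k₀ (em i.succ) ≠ 0) :
    k₀ (em 0) ^ 2 - ∑ i : Fin d, k₀ (em i.succ) ^ 2 ≠ 0 := by
  obtain ⟨i, hi⟩ := h
  have : 0 < ∑ i : Fin d, k₀ (em i.succ) ^ 2 :=
    Finset.sum_pos' (fun _ _ => sq_nonneg _) ⟨i, Finset.mem_univ _, by positivity⟩
  rw [h0]
  simp [this.ne']

lemma liftSign_sq (sgn : Bool) (μ : Fin (d+1)) :
    (if sgn = true ∧ μ = 0 then (-1 : ℝ) else 1) * (if sgn = true ∧ μ = 0 then -1 else 1) = 1 := by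
  split_ifs <;> norm_num

/-- Each entry of a distribution solving the `(s,x)`- or the `(s,x')`-equation up to a smooth
function is regular in the directions not characteristic for the lifted wave operator. -/
lemma liftOp_strongReg {D : DOp (d+1) m} (hDs : D.Smooth) (hDt : D.TimeIndep)
    (hD : IsPrenormallyHyp d m D) (sgn : Bool) {em : Fin (d+1) → Fin (2*d+1)}
    (hem : Function.Injective em) (u : Fin m → TD (2*d+1)) (f : Vec (2*d+1) → Fin m → ℂ)
    (hf : ∀ j, ContDiff ℝ (⊤ : ℕ∞) fun x => f x j)
    (hu : ∀ (j : Fin m) (φ : SchwartzMap (Vec (2*d+1)) ℂ), HasCompactSupport ⇑φ →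
      ∀ ψ : Fin m → SchwartzMap (Vec (2*d+1)) ℂ,
        (∀ l x, ψ l x = transposeApp (liftOp sgn em D) j l ⇑φ x) →
        (∑ l, u l (ψ l)) = ∫ x, f x j * φ x)
    {k₀ : Vec (2*d+1)} (hk : k₀ (em 0) ^ 2 - ∑ i : Fin d, k₀ (em i.succ) ^ 2 ≠ 0) (l : Fin m) :
    StrongReg (u l) k₀ := by
  obtain ⟨c, hc, Γ, hΓ, hcone⟩ := elliptic_cone em hk
  refine ⟨Γ, hΓ, fun φ hφ N => ?_⟩
  obtain ⟨C, hC⟩ := prenormal_decay hDs hD (liftSign_sq sgn) hem u f hf (fun j χ hχ => by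
    have hT := fun l => transposeApp_test (glift_smooth
      (e := fun μ => if sgn = true ∧ μ = 0 then -1 else 1) (em := em) hDs) j l hχ
    refine Eq.trans ?_ (hu j hχ.toS hχ.supp (fun l => (hT l).toS) fun l x => by
      rw [liftOp_eq_glift sgn em hDt]
      rfl)
    exact Finset.sum_congr rfl fun l _ => ev_toS (u l) (hT l)) c hc N l φ hφ
  exact ⟨C, fun k hk => hC k (hcone k hk)⟩

/-- A bi-parametrix is regular in all directions `k₀ ≠ 0` with vanishing time frequency. -/
lemma biParametrix_strongReg {D : DOp (d+1) m} (hDs : D.Smooth) (hDt : D.TimeIndep)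
    (hD : IsPrenormallyHyp d m D) {S : Fin m → Fin m → TD (2*d+1)} (hS : IsBiParametrix d m D S)
    {k₀ : Vec (2*d+1)} (hk : k₀ ≠ 0) (h0 : k₀ 0 = 0) (j l : Fin m) : StrongReg (S j l) k₀ := by
  obtain ⟨⟨f, hf, hfS⟩, g, hg, hgS⟩ := hS
  rcases exists_emb_ne_zero hk h0 with h | h
  · exact liftOp_strongReg hDs hDt hD false emb1_injective (fun i => S i l)
      (fun x i => f x i l) (fun i => hf i l) (fun i => hfS i l)
      (symbol_ne_zero (emb1 d) h0 h) j
  · exact liftOp_strongReg hDs hDt hD true emb2_injective (fun i => S j i)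
      (fun x i => g x j i) (fun i => hg j i) (fun i => hgS j i)
      (symbol_ne_zero (emb2 d) h0 h) l

/-- The Hadamard condition for the part `P` of `S = P + M + S₀` whose spectrum is bounded below in
the direction `σ`; the two signs `σ = ±1` treat the positive and the negative frequency part on an
equal footing. -/
lemma hadamard_of_spectral {D : DOp (d+1) m} (hDs : D.Smooth) (hDt : D.TimeIndep)
    (hD : IsPrenormallyHyp d m D) {S P M : Fin m → Fin m → TD (2*d+1)}
    {S0 : Vec (2*d+1) → Fin m → Fin m → ℂ} (hS0 : ∀ j l, ContDiff ℝ (⊤ : ℕ∞) fun x => S0 x j l)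
    (hdecomp : ∀ (j l : Fin m) (φ : SchwartzMap (Vec (2*d+1)) ℂ), HasCompactSupport ⇑φ →
      S j l φ = P j l φ + M j l φ + ∫ x, S0 x j l * φ x)
    (hP : IsBiParametrix d m D P) (σ α β : ℝ) (hσ : |σ| = 1)
    (hsP : ∀ j l, pfSupport (P j l) ⊆ {y : Vec (2*d+1) | α ≤ σ * y 0})
    (hsM : ∀ j l, pfSupport (M j l) ⊆ {y : Vec (2*d+1) | β ≤ -σ * y 0}) :
    wfSetMat P = wfSetMat S ∩ {z : Vec (2*d+1) × Vec (2*d+1) | 0 < σ * z.2 0} := by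
  have hσ0 : σ ≠ 0 := by
    rintro rfl
    simp at hσ
  -- for `σ k₀ > 0` the other two summands do not affect regularity
  have key : ∀ (x k₀ : Vec (2*d+1)), 0 < σ * k₀ 0 → ∀ j l,
      (IsRegularDirectedPoint (P j l) x k₀ ↔ IsRegularDirectedPoint (S j l) x k₀) := by
    intro x k₀ hk j l
    have hM : StrongReg (M j l) k₀ :=
      spectral_strongReg (M j l) (-σ) β (by rwa [abs_neg]) (hsM j l) (by linarith)
    constructor
    · refine fun h => regular_of_le (hS0 j l) (fun χ hχ => ?_) h hM
      rw [hdecomp j l χ hχ]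
      exact norm_add₃_le
    · refine fun h => regular_of_le (hS0 j l) (fun χ hχ => ?_) h hM
      rw [show P j l χ = S j l χ - M j l χ - ∫ x, S0 x j l * χ x by
        rw [hdecomp j l χ hχ]
        ring]
      exact (norm_sub_le _ _).trans (by gcongr; exact norm_sub_le _ _)
  ext ⟨x, k⟩
  simp only [wfSetMat, wfSet, Set.mem_iUnion, Set.mem_inter_iff, Set.mem_ofPred_eq]
  constructor
  · rintro ⟨j, l, hk, hreg⟩
    have hpos : 0 < σ * k 0 := by
      rcases lt_trichotomy (σ * k 0) 0 with h | h | h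
      · exact absurd ((spectral_strongReg (P j l) σ α hσ (hsP j l) h).regular x) hreg
      · have h0 : k 0 = 0 := (mul_eq_zero.1 h).resolve_left hσ0
        exact absurd ((biParametrix_strongReg hDs hDt hD hP hk h0 j l).regular x) hreg
      · exact h
    exact ⟨⟨j, l, hk, fun h => hreg ((key x k hpos j l).2 h)⟩, hpos⟩
  · rintro ⟨⟨j, l, hk, hreg⟩, hpos⟩
    exact ⟨j, l, hk, fun h => hreg ((key x k hpos j l).1 h)⟩

end biparametrix

/-- for a prenormally hyperbolic differential operator `D` on `ℝ^{1+d}` with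
smooth, time-independent coefficients, if `S = S₊ + S₋ + S₀` where `S₀` is smooth, `S₊, S₋`
are bi-parametrices for `D`, `supp F₀S₊ ⊆ [α,∞) × ℝ^{2d}` and `supp F₀S₋ ⊆ (-∞,β] × ℝ^{2d}`
(static asymptotic spectral condition), then `S₊` satisfies the Hadamard condition
`WF(S₊) = WF(S) ∩ K⁺`, and likewise `WF(S₋) = WF(S) ∩ K⁻`. -/
theorem statement4 (d m : ℕ) (hd : 1 ≤ d) (D : DOp (d+1) m)
    (hDsmooth : D.Smooth) (hDtime : D.TimeIndep) (hDpre : IsPrenormallyHyp d m D)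
    (S Sp Sm : Fin m → Fin m → TD (2*d+1))
    (S0 : Vec (2*d+1) → Fin m → Fin m → ℂ)
    (hS0 : ∀ j l, ContDiff ℝ (⊤ : ℕ∞) fun x => S0 x j l)
    (hdecomp : ∀ (j l : Fin m) (φ : SchwartzMap (Vec (2*d+1)) ℂ), HasCompactSupport ⇑φ →
      S j l φ = Sp j l φ + Sm j l φ + ∫ x, S0 x j l * φ x)
    (hSp : IsBiParametrix d m D Sp) (hSm : IsBiParametrix d m D Sm)
    (hsuppPlus : ∃ α : ℝ, ∀ j l, pfSupport (Sp j l) ⊆ {y : Vec (2*d+1) | α ≤ y 0})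
    (hsuppMinus : ∃ β : ℝ, ∀ j l, pfSupport (Sm j l) ⊆ {y : Vec (2*d+1) | y 0 ≤ β}) :
    wfSetMat Sp = wfSetMat S ∩ {z : Vec (2*d+1) × Vec (2*d+1) | 0 < z.2 0} ∧
    wfSetMat Sm = wfSetMat S ∩ {z : Vec (2*d+1) × Vec (2*d+1) | z.2 0 < 0} := by
  obtain ⟨α, hα⟩ := hsuppPlus
  obtain ⟨β, hβ⟩ := hsuppMinus
  constructor
  · have h := hadamard_of_spectral hDsmooth hDtime hDpre hS0 hdecomp hSp 1 α (-β) (by simp)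
      (fun j l y hy => by simpa using hα j l hy) (fun j l y hy => by simpa using hβ j l hy)
    simpa using h
  · have h := hadamard_of_spectral hDsmooth hDtime hDpre (M := Sp) hS0
      (fun j l φ hφ => by rw [hdecomp j l φ hφ, add_comm (Sp j l φ)]) hSm (-1) (-β) α (by simp)
      (fun j l y hy => by simpa using hβ j l hy) (fun j l y hy => by simpa using hα j l hy)
    simpa using h

end
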